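/- arXiv:2201.01345 — 2 statements merged into one kernel-verified Lean document; each statement's English description precedes it below -/
import Mathlib

section
/- (Theorem A, Real Nullstellensatz) For any polynomials p₁, …, p_m, q ∈ ℝ[x₁, …, x_d] the following are equivalent: (1) for every point a ∈ ℝ^d such that p₁(a) = ⋯ = p_m(a) = 0 one has q(a) = 0; (2) q belongs to every real ideal of ℝ[x₁, …, x_d] that contains p₁, …, p_m (equivalently, q belongs to the smallest real ideal containing p₁, …, p_m). -/
/-- An ideal `I` of a commutative ring `R` is *real* if whenever a finite sum of squares
`a 0 ^ 2 + ⋯ + a (k-1) ^ 2` lies in `I`, each `a i` lies in `I`. -/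
def Ideal.IsRealIdeal {R : Type*} [CommRing R] (I : Ideal R) : Prop :=
  ∀ (k : ℕ) (a : Fin k → R), (∑ i, a i ^ 2) ∈ I → ∀ i, a i ∈ I

namespace RealNS
open Polynomial

def IVP (K : Type*) [Field K] [LinearOrder K] : Prop :=
  ∀ (f : K[X]) (a b : K), a ≤ b → f.eval a * f.eval b < 0 →
    ∃ c, a ≤ c ∧ c ≤ b ∧ f.eval c = 0

section basics
variable {K : Type*} [Field K] [LinearOrder K] [IsStrictOrderedRing K]

theorem IVP.sign_eq (hK : IVP K) (f : K[X]) (a b : K) (hab : a ≤ b)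
    (h : ∀ c, a ≤ c → c ≤ b → f.eval c ≠ 0) :
    SignType.sign (f.eval a) = SignType.sign (f.eval b) := by
  have ha := h a le_rfl hab
  have hb := h b hab le_rfl
  have hn : ¬ f.eval a * f.eval b < 0 := by
    intro hc
    obtain ⟨c, h1, h2, h3⟩ := hK f a b hab hc
    exact h c h1 h2 h3
  have hpos : 0 < f.eval a * f.eval b :=
    lt_of_le_of_ne (not_lt.mp hn) (Ne.symm (mul_ne_zero ha hb))
  rcases mul_pos_iff.mp hpos with ⟨h1, h2⟩ | ⟨h1, h2⟩
  · rw [sign_pos h1, sign_pos h2]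
  · rw [sign_neg h1, sign_neg h2]

theorem IVP.sign_eq' (hK : IVP K) (f : K[X]) (a b : K) (h : ∀ c, f.eval c ≠ 0) :
    SignType.sign (f.eval a) = SignType.sign (f.eval b) := by
  rcases le_total a b with h1 | h1
  · exact hK.sign_eq _ _ _ h1 (fun x _ _ => h x)
  · exact (hK.sign_eq _ _ _ h1 (fun x _ _ => h x)).symm

theorem IVP.mul_pos (hK : IVP K) (f : K[X]) (a b : K) (hab : a ≤ b)
    (h : ∀ c, a ≤ c → c ≤ b → f.eval c ≠ 0) :
    0 < f.eval a * f.eval b := by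
  have ha := h a le_rfl hab
  have hb := h b hab le_rfl
  refine lt_of_le_of_ne (not_lt.mp ?_) (Ne.symm (mul_ne_zero ha hb))
  intro hc
  obtain ⟨c, h1, h2, h3⟩ := hK f a b hab hc
  exact h c h1 h2 h3

/-- Rolle for consecutive roots. -/
theorem IVP.rolle_aux (hK : IVP K) (f : K[X]) (hf : f ≠ 0) (a b : K) (hab : a < b)
    (ha : f.eval a = 0) (hb : f.eval b = 0)
    (h : ∀ c, a < c → c < b → f.eval c ≠ 0) :
    ∃ c, a < c ∧ c < b ∧ (derivative f).eval c = 0 := by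
  obtain ⟨g, hg, hga⟩ := exists_eq_pow_rootMultiplicity_mul_and_not_dvd f hf a
  have hm : 0 < f.rootMultiplicity a := (rootMultiplicity_pos hf).mpr ha
  obtain ⟨m, hm'⟩ : ∃ m, f.rootMultiplicity a = m + 1 := ⟨_, (Nat.succ_pred_eq_of_pos hm).symm⟩
  rw [hm'] at hg
  have hg0 : g ≠ 0 := by rintro rfl; simp at hga
  have hgb : g.eval b = 0 := by
    rw [hg] at hb
    simp only [eval_mul, eval_pow, eval_sub, eval_X, eval_C, mul_eq_zero, pow_eq_zero_iff',
      sub_eq_zero] at hb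
    rcases hb with h1 | h1
    · exact absurd h1.1 hab.ne'
    · exact h1
  obtain ⟨k, hk, hkb⟩ := exists_eq_pow_rootMultiplicity_mul_and_not_dvd g hg0 b
  have hn : 0 < g.rootMultiplicity b := (rootMultiplicity_pos hg0).mpr hgb
  obtain ⟨n, hn'⟩ : ∃ n, g.rootMultiplicity b = n + 1 := ⟨_, (Nat.succ_pred_eq_of_pos hn).symm⟩
  rw [hn'] at hk
  have hkb' : k.eval b ≠ 0 := fun h0 => hkb (dvd_iff_isRoot.mpr h0)
  have hka' : k.eval a ≠ 0 := fun h0 => hga (by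
    rw [hk]; exact Dvd.dvd.mul_left (dvd_iff_isRoot.mpr h0) _)
  have hfk : f = (X - C a) ^ (m + 1) * ((X - C b) ^ (n + 1) * k) := by rw [← hk]; exact hg
  have hk0 : ∀ c, a ≤ c → c ≤ b → k.eval c ≠ 0 := by
    intro c h1 h2 h3
    rcases h1.eq_or_lt with rfl | h1
    · exact hka' h3
    rcases h2.eq_or_lt with rfl | h2
    · exact hkb' h3
    apply h c h1 h2
    rw [hfk]; simp [h3]
  have hpos := hK.mul_pos k a b hab.le hk0
  set w : K[X] := C ((m:K)+1) * (X - C b) * k + C ((n:K)+1) * (X - C a) * k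
    + (X - C a) * (X - C b) * derivative k with hw
  have hd : derivative f = (X - C a) ^ m * (X - C b) ^ n * w := by
    rw [hfk, hw]
    simp only [derivative_mul, derivative_pow, derivative_sub, derivative_X, derivative_C]
    simp
    ring
  have hwa : w.eval a = (m+1) * (a-b) * k.eval a := by simp [hw]
  have hwb : w.eval b = (n+1) * (b-a) * k.eval b := by simp [hw]
  have hm1 : (0:K) < m + 1 := by positivity
  have hn1 : (0:K) < n + 1 := by positivity
  have hba : 0 < b - a := sub_pos.mpr hab
  have hneg : w.eval a * w.eval b < 0 := by
    have : w.eval a * w.eval b = -((m+1) * (n+1) * (b-a)*(b-a) * (k.eval a * k.eval b)) := by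
      rw [hwa, hwb]; ring
    rw [this]
    have : 0 < ((m+1:K) * (n+1) * (b-a)*(b-a) * (k.eval a * k.eval b)) := by positivity
    linarith
  obtain ⟨c, h1, h2, h3⟩ := hK w a b hab.le hneg
  refine ⟨c, lt_of_le_of_ne h1 ?_, lt_of_le_of_ne h2 ?_, ?_⟩
  · rintro rfl; rw [h3] at hneg; simp at hneg
  · rintro rfl; rw [h3] at hneg; simp at hneg
  · rw [hd]; simp [h3]

theorem IVP.rolle (hK : IVP K) (f : K[X]) (hf : f ≠ 0) (a b : K) (hab : a < b)
    (ha : f.eval a = 0) (hb : f.eval b = 0) :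
    ∃ c, a < c ∧ c < b ∧ (derivative f).eval c = 0 := by
  classical
  set T := f.roots.toFinset.filter (fun c => a < c) with hT
  have hbT : b ∈ T := by simp [hT, hab, hf, hb]
  have hne : T.Nonempty := ⟨b, hbT⟩
  have hmem := T.min'_mem hne
  have h1 : f.eval (T.min' hne) = 0 ∧ a < T.min' hne := by
    have := Finset.mem_filter.mp hmem
    simp [hf] at this
    exact ⟨this.1, this.2 _ hmem⟩
  have hle : T.min' hne ≤ b := T.min'_le b hbT
  obtain ⟨c, hc1, hc2, hc3⟩ := hK.rolle_aux f hf a (T.min' hne) h1.2 ha h1.1 (by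
    intro c hc1 hc2 hc3
    have : T.min' hne ≤ c := T.min'_le c (by simp [hT, hc1, hf, hc3])
    exact absurd hc2 (not_lt.mpr this))
  exact ⟨c, hc1, hc2.trans_le hle, hc3⟩

/-- location of a simple root in an interval where the derivative has no zeros. -/
theorem IVP.sign_root (hK : IVP K) (f : K[X]) (hf : f ≠ 0) (b c α : K) (hb : b < α) (hc : α < c)
    (hα : f.eval α = 0) (h : ∀ x, b < x → x < c → (derivative f).eval x ≠ 0) (x y : K)
    (hx : b ≤ x) (hx' : x ≤ c) (hy : b ≤ y) (hy' : y ≤ c) :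
    SignType.sign (f.eval x * f.eval y) = SignType.sign ((x - α) * (y - α)) := by
  obtain ⟨g, hg⟩ := dvd_iff_isRoot.mpr hα
  have huniq : ∀ z, b ≤ z → z ≤ c → f.eval z = 0 → z = α := by
    intro z h1 h2 h3
    rcases lt_trichotomy z α with h4 | h4 | h4
    · obtain ⟨w, h5, h6, h7⟩ := hK.rolle f hf z α h4 h3 hα
      exact absurd h7 (h w (by linarith) (by linarith))
    · exact h4
    · obtain ⟨w, h5, h6, h7⟩ := hK.rolle f hf α z h4 hα h3
      exact absurd h7 (h w (by linarith) (by linarith))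
  have hgα : g.eval α ≠ 0 := by
    have := h α hb hc
    rw [hg] at this
    simpa [derivative_mul] using this
  have hg0 : ∀ z, b ≤ z → z ≤ c → g.eval z ≠ 0 := by
    intro z h1 h2 h3
    have := huniq z h1 h2 (by rw [hg]; simp [h3])
    exact hgα (this ▸ h3)
  have hgpos : 0 < g.eval x * g.eval y := by
    rcases le_total x y with h1 | h1
    · exact hK.mul_pos g x y h1 (fun z h2 h3 => hg0 z (by linarith) (by linarith))
    · rw [mul_comm]
      exact hK.mul_pos g y x h1 (fun z h2 h3 => hg0 z (by linarith) (by linarith))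
  have : f.eval x * f.eval y = ((x - α) * (y - α)) * (g.eval x * g.eval y) := by
    rw [hg]; simp; ring
  rw [this, sign_mul _ (g.eval x * g.eval y), sign_pos hgpos, mul_one]

/-- root bound -/
theorem root_bound (n : ℕ) (a : ℕ → K) (α : K)
    (h : α ^ n + ∑ i ∈ Finset.range n, a i * α ^ i = 0) :
    |α| ≤ 1 + ∑ i ∈ Finset.range n, |a i| := by
  by_contra hlt
  push Not at hlt
  have hs : 0 ≤ ∑ i ∈ Finset.range n, |a i| := Finset.sum_nonneg (fun i _ => abs_nonneg _)
  have h1 : 1 < |α| := by linarith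
  rcases n with _ | n
  · simp at h
  have h2 : |α| ^ (n+1) ≤ (∑ i ∈ Finset.range (n+1), |a i|) * |α| ^ n := by
    rw [← abs_pow, eq_neg_of_add_eq_zero_left h, abs_neg, Finset.sum_mul]
    refine (Finset.abs_sum_le_sum_abs _ _).trans (Finset.sum_le_sum ?_)
    intro i hi
    rw [abs_mul, abs_pow]
    refine mul_le_mul_of_nonneg_left ?_ (abs_nonneg _)
    exact pow_le_pow_right₀ h1.le (by have := Finset.mem_range.mp hi; omega)
  rw [pow_succ'] at h2
  have h3 : 0 < |α| ^ n := by positivity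
  have := le_of_mul_le_mul_right h2 h3
  linarith

end basics
set_option linter.unusedSectionVars false
section step
variable {R S : Type*} [Field R] [LinearOrder R] [IsStrictOrderedRing R]
  [Field S] [LinearOrder S] [IsStrictOrderedRing S] {E : Type*} [CommRing E]

theorem sign_sub_eq_of_lt_iff {a b : R} {c d : S} (h1 : a ≠ b) (h2 : c ≠ d)
    (h : a < b ↔ c < d) : SignType.sign (b - a) = SignType.sign (d - c) := by
  by_cases hh : a < b
  · rw [sign_pos (sub_pos.mpr hh), sign_pos (sub_pos.mpr (h.mp hh))]
  · have h3 : b < a := lt_of_le_of_ne (not_lt.mp hh) h1.symm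
    have h4 : d < c := lt_of_le_of_ne (not_lt.mp (fun h' => hh (h.mpr h'))) h2.symm
    rw [sign_neg (sub_neg.mpr h3), sign_neg (sub_neg.mpr h4)]

theorem sign_poly (i : E →+* R) (j : E →+* S)
    (α : R) (α' : S) (hcut : ∀ e, SignType.sign (α - i e) = SignType.sign (α' - j e)) (n : ℕ)
    (hno : ∀ g : E[X], g.natDegree < n → g ≠ 0 → (∀ e, g.eval e ≠ 0) →
      SignType.sign (eval₂ i α g) = SignType.sign (eval₂ j α' g)) :
    ∀ m, m < n → ∀ g : E[X], g.natDegree = m →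
      SignType.sign (eval₂ i α g) = SignType.sign (eval₂ j α' g) := by
  intro m
  induction m using Nat.strong_induction_on with
  | _ m ih =>
  intro hm g hg
  by_cases hg0 : g = 0
  · simp [hg0]
  by_cases hr : ∃ e, g.eval e = 0
  · obtain ⟨e, he⟩ := hr
    obtain ⟨k, hk⟩ := dvd_iff_isRoot.mpr he
    have hk0 : k ≠ 0 := by rintro rfl; simp at hk; exact hg0 hk
    have : Nontrivial E := i.domain_nontrivial
    have hdeg : g.natDegree = 1 + k.natDegree := by
      rw [hk, (monic_X_sub_C e).natDegree_mul' hk0, natDegree_X_sub_C]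
    have h1 := ih k.natDegree (by omega) (by omega) k rfl
    rw [hk]
    simp only [eval₂_mul, eval₂_sub, eval₂_X, eval₂_C, sign_mul, h1, hcut]
  · push Not at hr
    exact hno g (hg ▸ hm) hg0 hr

theorem sign_to_lt {i : E →+* R} {j : E →+* S}
    (hs : ∀ e, SignType.sign (i e) = SignType.sign (j e)) (a b : E) : i a < i b ↔ j a < j b := by
  have h := hs (b - a)
  rw [← sub_pos, ← sub_pos (a := j b), ← map_sub, ← map_sub, ← sign_eq_one_iff, h, sign_eq_one_iff]

theorem sign_to_zero {i : E →+* R} {j : E →+* S}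
    (hs : ∀ e, SignType.sign (i e) = SignType.sign (j e)) (a : E) : i a = 0 ↔ j a = 0 := by
  rw [← sign_eq_zero_iff, hs, sign_eq_zero_iff]

theorem exists_bound (i : E →+* R) (f : E[X]) (hf : f.Monic) (α : R) (hα : eval₂ i α f = 0) :
    ∃ M : E, |α| ≤ i M := by
  have habs : ∀ e : E, ∃ e', i e' = |i e| := by
    intro e
    rcases abs_choice (i e) with h | h
    · exact ⟨e, h.symm⟩
    · exact ⟨-e, by rw [h, map_neg]⟩
  choose ab hab using habs
  refine ⟨1 + ∑ k ∈ Finset.range f.natDegree, ab (f.coeff k), ?_⟩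
  rw [map_add, map_one, map_sum]
  simp only [hab]
  apply root_bound f.natDegree (fun k => i (f.coeff k)) α
  rw [eval₂_eq_sum_range, Finset.sum_range_succ] at hα
  rw [hf.coeff_natDegree, map_one, one_mul] at hα
  rw [add_comm]; exact hα

theorem alg_step (hRI : IVP R) (hSI : IVP S) (i : E →+* R) (j : E →+* S)
    (hi : Function.Injective i) (hs : ∀ e, SignType.sign (i e) = SignType.sign (j e))
    (f : E[X]) (hf : f.Monic)
    (hR : ∀ g : E[X], g ≠ 0 → g.natDegree < f.natDegree → ∀ x, eval₂ i x g = 0 → ∃ e, i e = x)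
    (hS : ∀ g : E[X], g ≠ 0 → g.natDegree < f.natDegree → ∀ x, eval₂ j x g = 0 → ∃ e, j e = x)
    (α : R) (hα : eval₂ i α f = 0) (hαE : ∀ e, i e ≠ α) :
    ∃ α' : S, ∀ g : E[X], SignType.sign (eval₂ i α g) = SignType.sign (eval₂ j α' g) := by
  classical
  have : Nontrivial E := i.domain_nontrivial
  have hlt := sign_to_lt hs
  have hz := sign_to_zero hs
  have hf1 : f ≠ 1 := by rintro rfl; simp at hα
  have hn : 0 < f.natDegree := by
    rcases Nat.eq_zero_or_pos f.natDegree with h | h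
    · exact absurd (hf.natDegree_eq_zero.mp h) hf1
    · exact h
  -- the derivative
  have hdi : (derivative f).map i ≠ 0 := by
    rw [← derivative_map]
    intro h
    have := derivative_eq_zero.mp h
    rw [hf.natDegree_map] at this
    omega
  have hd0 : derivative f ≠ 0 := by intro h; rw [h] at hdi; simp at hdi
  have hdn : (derivative f).natDegree < f.natDegree := natDegree_derivative_lt hn.ne'
  have hdα : eval₂ i α (derivative f) ≠ 0 := fun h => by
    obtain ⟨e, he⟩ := hR _ hd0 hdn α h
    exact hαE e he
  obtain ⟨M, hM⟩ := exists_bound i f hf α hα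
  set Z := ((derivative f).map i).roots.toFinset with hZ
  have hZmem : ∀ x, x ∈ Z ↔ eval₂ i x (derivative f) = 0 := by
    intro x
    simp [hZ, hdi, eval_map]
  -- lower end
  have hMpos : 0 ≤ i M := (abs_nonneg _).trans hM
  obtain ⟨b, hbα, hb⟩ : ∃ b : E, i b < α ∧ ∀ x ∈ Z, x < α → x ≤ i b := by
    set T := insert (i (-M)) (Z.filter (· < α)) with hT
    have hne : T.Nonempty := ⟨_, Finset.mem_insert_self _ _⟩
    have hle : i (-M) < α := by
      refine lt_of_le_of_ne ?_ (hαE _)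
      rw [map_neg]; exact (abs_le.mp hM).1
    have hm := T.max'_mem hne
    have h1 : T.max' hne < α ∧ ∃ e, i e = T.max' hne := by
      rcases Finset.mem_insert.mp hm with h | h
      · rw [h]; exact ⟨hle, _, rfl⟩
      · obtain ⟨h2, h3⟩ := Finset.mem_filter.mp h
        exact ⟨h3, hR _ hd0 hdn _ ((hZmem _).mp h2)⟩
    obtain ⟨h1, e, he⟩ := h1
    refine ⟨e, he ▸ h1, fun x hx hxα => ?_⟩
    rw [he]
    exact T.le_max' x (Finset.mem_insert_of_mem (Finset.mem_filter.mpr ⟨hx, hxα⟩))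
  obtain ⟨c, hcα, hc⟩ : ∃ c : E, α < i c ∧ ∀ x ∈ Z, α < x → i c ≤ x := by
    set T := insert (i M) (Z.filter (α < ·)) with hT
    have hne : T.Nonempty := ⟨_, Finset.mem_insert_self _ _⟩
    have hle : α < i M := by
      refine lt_of_le_of_ne ?_ (hαE _).symm
      exact (abs_le.mp hM).2
    have hm := T.min'_mem hne
    have h1 : α < T.min' hne ∧ ∃ e, i e = T.min' hne := by
      rcases Finset.mem_insert.mp hm with h | h
      · rw [h]; exact ⟨hle, _, rfl⟩
      · obtain ⟨h2, h3⟩ := Finset.mem_filter.mp h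
        exact ⟨h3, hR _ hd0 hdn _ ((hZmem _).mp h2)⟩
    obtain ⟨h1, e, he⟩ := h1
    refine ⟨e, he ▸ h1, fun x hx hxα => ?_⟩
    rw [he]
    exact T.min'_le x (Finset.mem_insert_of_mem (Finset.mem_filter.mpr ⟨hx, hxα⟩))
  have hnoR : ∀ x, i b < x → x < i c → (derivative (f.map i)).eval x ≠ 0 := by
    intro x h1 h2 h3
    rw [derivative_map, eval_map] at h3
    rcases lt_trichotomy x α with h | h | h
    · exact absurd (hb x ((hZmem x).mpr h3) h) (not_le.mpr h1)
    · exact hdα (h ▸ h3)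
    · exact absurd (hc x ((hZmem x).mpr h3) h) (not_le.mpr h2)
  have hnoS : ∀ x, j b < x → x < j c → (derivative (f.map j)).eval x ≠ 0 := by
    intro x h1 h2 h3
    rw [derivative_map, eval_map] at h3
    obtain ⟨e, rfl⟩ := hS _ hd0 hdn x h3
    refine hnoR (i e) ((hlt _ _).mpr h1) ((hlt _ _).mpr h2) ?_
    rw [derivative_map, eval_map, eval₂_at_apply] at *
    exact (hz _).mpr h3
  have hfi : f.map i ≠ 0 := (hf.map i).ne_zero
  have hfj : f.map j ≠ 0 := (hf.map j).ne_zero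
  have hαi : (f.map i).eval α = 0 := by rw [eval_map]; exact hα
  have hsgR := hRI.sign_root (f.map i) hfi (i b) (i c) α hbα hcα hαi hnoR
  have hbc : i b < i c := hbα.trans hcα
  have hbc' : j b < j c := (hlt _ _).mp hbc
  have key : ∀ x y : E, SignType.sign ((f.map i).eval (i x) * (f.map i).eval (i y)) =
      SignType.sign ((f.map j).eval (j x) * (f.map j).eval (j y)) := by
    intro x y
    simp only [eval_map, eval₂_at_apply]
    rw [← map_mul, ← map_mul, hs]
  have hneg : (f.map j).eval (j b) * (f.map j).eval (j c) < 0 := by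
    rw [← sign_eq_neg_one_iff, ← key, hsgR _ _ le_rfl hbc.le hbc.le le_rfl, sign_eq_neg_one_iff]
    exact mul_neg_of_neg_of_pos (sub_neg.mpr hbα) (sub_pos.mpr hcα)
  obtain ⟨α', h1, h2, hα'⟩ := hSI (f.map j) _ _ hbc'.le hneg
  have hbα' : j b < α' := lt_of_le_of_ne h1 (by rintro rfl; rw [hα'] at hneg; simp at hneg)
  have hcα' : α' < j c := lt_of_le_of_ne h2 (by rintro rfl; rw [hα'] at hneg; simp at hneg)
  have hsgS := hSI.sign_root (f.map j) hfj (j b) (j c) α' hbα' hcα' hα' hnoS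
  have hα'E : ∀ e, j e ≠ α' := by
    rintro e rfl
    rw [eval_map, eval₂_at_apply, ← hz] at hα'
    have h3 := hsgR (i e) (i b) ((hlt _ _).mpr hbα').le ((hlt _ _).mpr hcα').le le_rfl hbc.le
    rw [eval_map, eval₂_at_apply, hα', zero_mul, sign_zero, eq_comm, sign_eq_zero_iff] at h3
    rcases mul_eq_zero.mp h3 with h | h
    · exact hαE e (sub_eq_zero.mp h)
    · exact hαE b (sub_eq_zero.mp h)
  have hcut : ∀ e, SignType.sign (α - i e) = SignType.sign (α' - j e) := by
    intro e
    apply sign_sub_eq_of_lt_iff (hαE e) (hα'E e)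
    rcases le_total (i e) (i b) with h | h
    · have h' : j e ≤ j b := by rw [← not_lt, ← hlt, not_lt]; exact h
      exact ⟨fun _ => h'.trans_lt hbα', fun _ => h.trans_lt hbα⟩
    rcases le_total (i c) (i e) with h3 | h3
    · have h' : j c ≤ j e := by rw [← not_lt, ← hlt, not_lt]; exact h3
      exact ⟨fun hh => absurd (hh.trans hcα) (not_lt.mpr h3),
        fun hh => absurd (hh.trans hcα') (not_lt.mpr h')⟩
    have h' : j b ≤ j e := by rw [← not_lt, ← hlt, not_lt]; exact h
    have h3' : j e ≤ j c := by rw [← not_lt, ← hlt, not_lt]; exact h3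
    have k1 := hsgR (i e) (i b) h h3 le_rfl hbc.le
    have k2 := hsgS (j e) (j b) h' h3' le_rfl hbc'.le
    rw [key, k2, sign_mul, sign_mul, sign_neg (sub_neg.mpr hbα), sign_neg (sub_neg.mpr hbα')] at k1
    have k3 : SignType.sign (j e - α') = SignType.sign (i e - α) := by
      revert k1
      generalize SignType.sign (j e - α') = u
      generalize SignType.sign (i e - α) = v
      revert u v; decide
    rw [← sub_neg, ← sub_neg (a := j e), ← sign_eq_neg_one_iff, ← sign_eq_neg_one_iff, k3]
  refine ⟨α', ?_⟩
  have hsmall := sign_poly i j α α' hcut f.natDegree (by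
    intro g hg hg0 hge
    have hge' : ∀ e, i (g.eval e) ≠ 0 := fun e h0 => hge e (hi (by rw [h0, map_zero]))
    have hnoR : ∀ x, (g.map i).eval x ≠ 0 := by
      intro x hx
      rw [eval_map] at hx
      obtain ⟨e, rfl⟩ := hR g hg0 hg x hx
      rw [eval₂_at_apply] at hx
      exact hge' e hx
    have hnoS : ∀ x, (g.map j).eval x ≠ 0 := by
      intro x hx
      rw [eval_map] at hx
      obtain ⟨e, rfl⟩ := hS g hg0 hg x hx
      rw [eval₂_at_apply, ← hz] at hx
      exact hge' e hx
    have e1 := hRI.sign_eq' (g.map i) α (i 0) hnoR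
    have e2 := hSI.sign_eq' (g.map j) α' (j 0) hnoS
    rw [eval_map, eval_map, eval₂_at_apply] at e1 e2
    rw [e1, e2, hs])
  intro g
  have hdiv := modByMonic_add_div g f
  have hα2 : eval₂ j α' f = 0 := by rw [← eval_map]; exact hα'
  rw [← hdiv]
  simp only [eval₂_add, eval₂_mul, hα, hα2, zero_mul, add_zero]
  exact hsmall _ (natDegree_modByMonic_lt g hf hf1) _ rfl

end step
section maxgraph
variable {R S : Type*} [Field R] [LinearOrder R] [IsStrictOrderedRing R]
  [Field S] [LinearOrder S] [IsStrictOrderedRing S]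

def SG (G : Subring (R × S)) : Prop := ∀ g ∈ G, SignType.sign g.1 = SignType.sign g.2

theorem exists_maxG (G₀ : Subring (R × S)) (h0 : SG G₀) :
    ∃ G, G₀ ≤ G ∧ Maximal SG G := by
  apply zorn_le_nonempty₀ {G | SG G} _ G₀ h0
  intro c hc hchain y hy
  refine ⟨sSup c, ?_, fun z hz => le_sSup hz⟩
  intro g hg
  obtain ⟨s, hs, hgs⟩ := (Subring.mem_sSup_of_directedOn ⟨y, hy⟩ hchain.directedOn).mp hg
  exact hc hs g hgs

variable {G : Subring (R × S)} 

theorem maxG_mem (hG : Maximal SG G) (α : R) (α' : S)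
    (h : ∀ g : (↥G)[X], SignType.sign (eval₂ ((RingHom.fst R S).comp G.subtype) α g) =
      SignType.sign (eval₂ ((RingHom.snd R S).comp G.subtype) α' g)) : (α, α') ∈ G := by
  set φ := eval₂RingHom G.subtype ((α, α') : R × S) with hφ
  have h1 : ∀ g, (φ g).1 = eval₂ ((RingHom.fst R S).comp G.subtype) α g := by
    intro g
    exact hom_eval₂ g G.subtype (RingHom.fst R S) (α, α')
  have h2 : ∀ g, (φ g).2 = eval₂ ((RingHom.snd R S).comp G.subtype) α' g := by
    intro g
    exact hom_eval₂ g G.subtype (RingHom.snd R S) (α, α')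
  have hle : G ≤ φ.range := fun x hx => ⟨C ⟨x, hx⟩, by simp [hφ]⟩
  have := hG.2 (y := φ.range) (by rintro _ ⟨g, rfl⟩; rw [h1, h2, h]) hle
  exact this ⟨X, by simp [hφ]⟩

theorem maxG_inv (hG : Maximal SG G) (x : R × S) (hx : x ∈ G) (hx0 : x.1 ≠ 0) :
    (x.1⁻¹, x.2⁻¹) ∈ G := by
  have hsx := hG.1 x hx
  have hx0' : x.2 ≠ 0 := by
    rw [ne_eq, ← sign_eq_zero_iff, ← hsx, sign_eq_zero_iff]; exact hx0
  let G' : Subring (R × S) :=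
    { carrier := {u | ∃ N : ℕ, u * x ^ N ∈ G}
      mul_mem' := by
        rintro u v ⟨N, hN⟩ ⟨M, hM⟩
        exact ⟨N + M, by convert G.mul_mem hN hM using 1; ring⟩
      one_mem' := ⟨0, by simp⟩
      add_mem' := by
        rintro u v ⟨N, hN⟩ ⟨M, hM⟩
        refine ⟨N + M, ?_⟩
        convert G.add_mem (G.mul_mem hN (G.pow_mem hx M)) (G.mul_mem hM (G.pow_mem hx N)) using 1
        ring
      zero_mem' := ⟨0, by simp⟩
      neg_mem' := by
        rintro u ⟨N, hN⟩
        exact ⟨N, by convert G.neg_mem hN using 1; ring⟩ }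
  have hle : G ≤ G' := fun u hu => ⟨0, by simpa using hu⟩
  have hSG : SG G' := by
    rintro u ⟨N, hN⟩
    have h := hG.1 _ hN
    simp only [Prod.fst_mul, Prod.snd_mul, Prod.pow_fst, Prod.pow_snd, sign_mul, sign_pow, hsx] at h
    have hne : SignType.sign x.2 ^ N ≠ 0 := pow_ne_zero _ (sign_ne_zero.mpr hx0')
    exact mul_right_cancel₀ hne h
  refine hG.2 hSG hle ⟨1, ?_⟩
  convert G.one_mem using 1
  ext <;> simp [hx0, hx0']

theorem maxG_alg (hRI : IVP R) (hSI : IVP S) (hG : Maximal SG G) :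
    ∀ n, ∀ f : (↥G)[X], f ≠ 0 → f.natDegree = n →
      (∀ x, eval₂ ((RingHom.fst R S).comp G.subtype) x f = 0 →
        ∃ e, ((RingHom.fst R S).comp G.subtype) e = x) ∧
      (∀ x, eval₂ ((RingHom.snd R S).comp G.subtype) x f = 0 →
        ∃ e, ((RingHom.snd R S).comp G.subtype) e = x) := by
  set i := (RingHom.fst R S).comp G.subtype with hidef
  set j := (RingHom.snd R S).comp G.subtype with hjdef
  have hs : ∀ e, SignType.sign (i e) = SignType.sign (j e) := fun e => hG.1 e.1 e.2
  have hz := sign_to_zero hs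
  have hi : Function.Injective i := by
    rw [injective_iff_map_eq_zero]
    intro a ha
    exact Subtype.ext (Prod.ext ha ((hz a).mp ha))
  have hj : Function.Injective j := by
    rw [injective_iff_map_eq_zero]
    intro a ha
    exact Subtype.ext (Prod.ext ((hz a).mpr ha) ha)
  intro n
  induction n using Nat.strong_induction_on with
  | _ n ih =>
  intro f₀ hf₀ hn₀
  -- make it monic
  obtain ⟨u, hu⟩ : ∃ u : G, u * f₀.leadingCoeff = 1 := by
    have hl : i f₀.leadingCoeff ≠ 0 := by
      intro h; exact hf₀ (leadingCoeff_eq_zero.mp (hi (by rw [h, map_zero])))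
    have hl' : j f₀.leadingCoeff ≠ 0 := fun h => hl ((hz _).mpr h)
    refine ⟨⟨_, maxG_inv hG f₀.leadingCoeff.1 f₀.leadingCoeff.2 hl⟩, ?_⟩
    apply Subtype.ext
    ext
    · exact inv_mul_cancel₀ hl
    · exact inv_mul_cancel₀ hl'
  set f := C u * f₀ with hfdef
  have hfm : f.Monic := monic_C_mul_of_mul_leadingCoeff_eq_one hu
  have hfn : f.natDegree ≤ n := hn₀ ▸ natDegree_C_mul_le _ _
  have hR : ∀ g : (↥G)[X], g ≠ 0 → g.natDegree < f.natDegree → ∀ x, eval₂ i x g = 0 → ∃ e, i e = x :=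
    fun g hg hgn => (ih g.natDegree (by omega) g hg rfl).1
  have hS : ∀ g : (↥G)[X], g ≠ 0 → g.natDegree < f.natDegree → ∀ x, eval₂ j x g = 0 → ∃ e, j e = x :=
    fun g hg hgn => (ih g.natDegree (by omega) g hg rfl).2
  constructor
  · intro α hα
    by_contra hno
    push Not at hno
    obtain ⟨α', h⟩ := alg_step hRI hSI i j hi hs f hfm hR hS α (by simp [hfdef, eval₂_mul, hα]) hno
    exact hno ⟨_, maxG_mem hG α α' h⟩ rfl
  · intro α' hα
    by_contra hno
    push Not at hno
    obtain ⟨α, h⟩ := alg_step hSI hRI j i hj (fun e => (hs e).symm) f hfm hS hR α'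
      (by simp [hfdef, eval₂_mul, hα]) hno
    exact hno ⟨_, maxG_mem hG α α' (fun g => (h g).symm)⟩ rfl

end maxgraph
section germ
open Filter
variable {ι : Type*} (U : Ultrafilter ι) {k : Type*} [Field k] [LinearOrder k]
  [IsStrictOrderedRing k]

theorem germ_poly (f : (Germ (U : Filter ι) k)[X]) : ∃ F : ι → k[X], ∀ x : ι → k,
    f.eval ((x : Germ (U : Filter ι) k)) = ((fun a => (F a).eval (x a) : ι → k) : Germ (U : Filter ι) k) := by
  induction f using Polynomial.induction_on' with
  | add p q hp hq =>
    obtain ⟨F, hF⟩ := hp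
    obtain ⟨H, hH⟩ := hq
    refine ⟨fun a => F a + H a, fun x => ?_⟩
    rw [eval_add, hF, hH]
    simp only [eval_add]
    rfl
  | monomial n c =>
    induction c using Germ.inductionOn with
    | _ c =>
    refine ⟨fun a => monomial n (c a), fun x => ?_⟩
    simp only [eval_monomial]
    rfl

theorem germ_sign (u : ι → k) (σ : SignType) (h : ∀ᶠ a in (U : Filter ι), SignType.sign (u a) = σ) :
    SignType.sign ((u : Germ (U : Filter ι) k)) = σ := by
  rcases σ with _ | _ | _
  · change _ = (0 : SignType)
    rw [sign_eq_zero_iff]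
    refine Germ.coe_eq.mpr ?_
    filter_upwards [h] with a ha
    exact sign_eq_zero_iff.mp ha
  · change _ = (-1 : SignType)
    rw [sign_eq_neg_one_iff]
    refine Germ.coe_lt.mpr ?_
    filter_upwards [h] with a ha
    exact sign_eq_neg_one_iff.mp ha
  · change _ = (1 : SignType)
    rw [sign_eq_one_iff]
    refine Germ.coe_lt.mpr ?_
    filter_upwards [h] with a ha
    exact sign_eq_one_iff.mp ha

theorem germ_IVP (hk : IVP k) : IVP (Germ (U : Filter ι) k) := by
  intro f a b hab hneg
  obtain ⟨F, hF⟩ := germ_poly U f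
  induction a using Germ.inductionOn with
  | _ a =>
  induction b using Germ.inductionOn with
  | _ b =>
  rw [hF, hF] at hneg
  have h1 : ∀ᶠ x in (U : Filter ι), a x ≤ b x := Germ.coe_le.mp hab
  have h2 : ∀ᶠ x in (U : Filter ι), (F x).eval (a x) * (F x).eval (b x) < 0 := Germ.coe_lt.mp hneg
  have h3 : ∀ x, ∃ c, (a x ≤ b x → (F x).eval (a x) * (F x).eval (b x) < 0 →
      a x ≤ c ∧ c ≤ b x ∧ (F x).eval c = 0) := by
    intro x
    by_cases hx : a x ≤ b x ∧ (F x).eval (a x) * (F x).eval (b x) < 0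
    · obtain ⟨c, hc⟩ := hk (F x) (a x) (b x) hx.1 hx.2
      exact ⟨c, fun _ _ => hc⟩
    · exact ⟨0, fun h h' => absurd ⟨h, h'⟩ hx⟩
  choose c hc using h3
  refine ⟨(c : Germ (U : Filter ι) k), ?_, ?_, ?_⟩
  · refine Germ.coe_le.mpr ?_
    filter_upwards [h1, h2] with x hx hx'
    exact (hc x hx hx').1
  · refine Germ.coe_le.mpr ?_
    filter_upwards [h1, h2] with x hx hx'
    exact (hc x hx hx').2.1
  · rw [hF]
    refine Germ.coe_eq.mpr ?_
    filter_upwards [h1, h2] with x hx hx'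
    exact (hc x hx hx').2.2

/-- constants -/
noncomputable def germC : k →+* Germ (U : Filter ι) k :=
  (Germ.coeRingHom (R := k) (U : Filter ι)).comp (Pi.constRingHom ι k)

theorem germ_eval₂ (g : k[X]) (a : ι → k) :
    eval₂ (germC U) (a : Germ (U : Filter ι) k) g = ((fun T => g.eval (a T) : ι → k) : Germ (U : Filter ι) k) := by
  have h1 := hom_eval₂ g (Pi.constRingHom ι k) (Germ.coeRingHom (R := k) (U : Filter ι)) a
  have h2 : eval₂ (Pi.constRingHom ι k) a g = fun T => g.eval (a T) := by
    funext T
    have := hom_eval₂ g (Pi.constRingHom ι k) (Pi.evalRingHom (fun _ => k) T) a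
    exact this
  rw [h2] at h1
  exact h1.symm

theorem germ_mv {n : ℕ} (p : MvPolynomial (Fin n) k) (a : Fin n → ι → k) :
    MvPolynomial.eval₂ (germC U) (fun m => ((a m : ι → k) : Germ (U : Filter ι) k)) p
      = ((fun T => MvPolynomial.eval (fun m => a m T) p : ι → k) : Germ (U : Filter ι) k) := by
  have h1 := MvPolynomial.eval₂_comp_left (Germ.coeRingHom (R := k) (U : Filter ι)) (Pi.constRingHom ι k) a p
  have h2 : MvPolynomial.eval₂ (Pi.constRingHom ι k) a p = fun T => MvPolynomial.eval (fun m => a m T) p := by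
    funext T
    have := MvPolynomial.eval₂_comp_left (Pi.evalRingHom (fun _ => k) T) (Pi.constRingHom ι k) a p
    exact this
  rw [h2] at h1
  exact h1.symm

end germ

theorem trans_step {R : Type*} [Field R] [LinearOrder R] [IsStrictOrderedRing R] (hR : IVP R)
    (k : Subfield R) (hk : ∀ f : (↥k)[X], f ≠ 0 → ∀ x, eval₂ k.subtype x f = 0 → x ∈ k)
    (hkI : IVP k) (t : R) (htk : t ∉ k) (n : ℕ) (x : Fin n → R)
    (hx : ∀ i, ∃ f : R[X], f ≠ 0 ∧ f.eval (x i) = 0 ∧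
      ∀ m, f.coeff m ∈ Subfield.closure (insert t (k : Set R)))
    (p : MvPolynomial (Fin n) k) (hp : MvPolynomial.eval₂ k.subtype x p = 0) :
    ∃ y : Fin n → k, MvPolynomial.eval y p = 0 := by
  classical
  have hlt : ∀ T : Finset k, ∃ a : k, ∀ r ∈ T, SignType.sign (t - (r : R)) = SignType.sign (a - r) := by
    intro T
    obtain ⟨m, h1, h2⟩ := Order.exists_between_finsets (α := k) (T.filter (fun r : k => (r : R) < t))
      (T.filter (fun r : k => t < (r : R))) (by
        intro a ha b hb
        exact_mod_cast ((Finset.mem_filter.mp ha).2.trans (Finset.mem_filter.mp hb).2))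
    refine ⟨m, fun r hr => ?_⟩
    rcases lt_trichotomy (r : R) t with h | h | h
    · rw [sign_pos (sub_pos.mpr h), sign_pos (sub_pos.mpr (h1 r (Finset.mem_filter.mpr ⟨hr, h⟩)))]
    · exact absurd (h ▸ r.2) htk
    · rw [sign_neg (sub_neg.mpr h), sign_neg (sub_neg.mpr (h2 r (Finset.mem_filter.mpr ⟨hr, h⟩)))]
  choose a ha using hlt
  let U : Ultrafilter (Finset k) := Ultrafilter.of Filter.atTop
  have hU : (U : Filter (Finset k)) ≤ Filter.atTop := Ultrafilter.of_le _
  let ts : Filter.Germ (U : Filter (Finset k)) k := (a : Filter.Germ (U : Filter (Finset k)) k)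
  have hcut : ∀ e : k, SignType.sign (t - k.subtype e) = SignType.sign (ts - germC U e) := by
    intro e
    symm
    apply germ_sign U (fun T => a T - e)
    have : ∀ᶠ T in (Filter.atTop : Filter (Finset k)), {e} ⊆ T := Filter.eventually_ge_atTop {e}
    filter_upwards [hU this] with T hT
    exact (ha T e (hT (Finset.mem_singleton_self e))).symm
  have hsgn : ∀ g : (↥k)[X], SignType.sign (eval₂ k.subtype t g) = SignType.sign (eval₂ (germC U) ts g) := by
    intro g
    refine sign_poly k.subtype (germC U) t ts hcut (g.natDegree + 1) ?_ g.natDegree (by omega) g rfl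
    intro g _ hg0 hno
    have h1 := hR.sign_eq' (g.map k.subtype) t (k.subtype 0) (by
      intro c hc
      rw [eval_map] at hc
      have hck := hk g hg0 c hc
      have : eval₂ k.subtype (k.subtype ⟨c, hck⟩) g = 0 := hc
      rw [eval₂_at_apply] at this
      exact hno _ ((map_eq_zero _).mp this))
    rw [eval_map, eval_map, eval₂_at_apply] at h1
    rw [h1, germ_eval₂]
    symm
    apply germ_sign
    refine Filter.Eventually.of_forall (fun T => ?_)
    exact hkI.sign_eq' g (a T) 0 hno
  let φ : (↥k)[X] →+* R × Filter.Germ (U : Filter (Finset k)) k :=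
    (eval₂RingHom k.subtype t).prod (eval₂RingHom (germC U) ts)
  obtain ⟨G, hG0, hG⟩ := exists_maxG φ.range (by
    rintro _ ⟨g, rfl⟩
    exact hsgn g)
  have hkG : ∀ c : k, ((c : R), germC U c) ∈ G := fun c => hG0 ⟨C c, by simp [φ]⟩
  have htG : (t, ts) ∈ G := hG0 ⟨X, by simp [φ]⟩
  have hcl : ∀ c ∈ Subfield.closure (insert t (k : Set R)),
      ∃ e, ((RingHom.fst R _).comp G.subtype) e = c := by
    intro c hc
    induction hc using Subfield.closure_induction with
    | mem c hc =>
      rcases hc with rfl | hc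
      · exact ⟨⟨_, htG⟩, rfl⟩
      · exact ⟨⟨_, hkG ⟨c, hc⟩⟩, rfl⟩
    | one => exact ⟨1, map_one _⟩
    | add x y _ _ hx hy =>
      obtain ⟨e, rfl⟩ := hx
      obtain ⟨e', rfl⟩ := hy
      exact ⟨e + e', map_add _ _ _⟩
    | neg x _ hx =>
      obtain ⟨e, rfl⟩ := hx
      exact ⟨-e, map_neg _ _⟩
    | inv x _ hx =>
      obtain ⟨e, rfl⟩ := hx
      by_cases h0 : e.1.1 = 0
      · exact ⟨0, by simp [h0]⟩
      · exact ⟨⟨_, maxG_inv hG e.1 e.2 h0⟩, rfl⟩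
    | mul x y _ _ hx hy =>
      obtain ⟨e, rfl⟩ := hx
      obtain ⟨e', rfl⟩ := hy
      exact ⟨e * e', map_mul _ _ _⟩
  have hxG : ∀ m, ∃ s : Finset k → k,
      (x m, (s : Filter.Germ (U : Filter (Finset k)) k)) ∈ G := by
    intro m
    obtain ⟨f, hf0, hfx, hfc⟩ := hx m
    have hl : f ∈ lifts ((RingHom.fst R _).comp G.subtype) := by
      rw [lifts_iff_coeff_lifts]
      intro q
      exact hcl _ (hfc q)
    obtain ⟨g, hg⟩ := (mem_lifts _).mp hl
    obtain ⟨e, he⟩ := (maxG_alg hR (germ_IVP U hkI) hG _ g (by rintro rfl; simp at hg; exact hf0 hg.symm) rfl).1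
      (x m) (by rw [← eval_map, hg, hfx])
    obtain ⟨⟨u, v⟩, huv⟩ := e
    have hu : u = x m := he
    subst hu
    induction v using Filter.Germ.inductionOn with
    | _ v => exact ⟨v, huv⟩
  choose s hs using hxG
  have hmem : ∀ p : MvPolynomial (Fin n) k, (MvPolynomial.eval₂ k.subtype x p, MvPolynomial.eval₂ (germC U)
      (fun m => ((s m : Finset k → k) : Filter.Germ (U : Filter (Finset k)) k)) p) ∈ G := by
    intro p
    induction p using MvPolynomial.induction_on with
    | C c => simpa using hkG c
    | add p q hp hq =>
      rw [MvPolynomial.eval₂_add, MvPolynomial.eval₂_add]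
      exact G.add_mem hp hq
    | mul_X p m hp =>
      rw [MvPolynomial.eval₂_mul, MvPolynomial.eval₂_mul, MvPolynomial.eval₂_X,
        MvPolynomial.eval₂_X]
      exact G.mul_mem hp (hs m)
  have h0 := hG.1 _ (hmem p)
  simp only at h0
  rw [hp, sign_zero, eq_comm, sign_eq_zero_iff, germ_mv] at h0
  have h1 : ∀ᶠ T in (U : Filter (Finset k)), MvPolynomial.eval (fun m => s m T) p = 0 :=
    Filter.Germ.coe_eq.mp h0
  obtain ⟨T, hT⟩ := h1.exists
  exact ⟨_, hT⟩
section transfer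
variable {R : Type*} [Field R] [LinearOrder R] [IsStrictOrderedRing R]

theorem IVP_subfield (hR : IVP R) (k : Subfield R)
    (hk : ∀ f : (↥k)[X], f ≠ 0 → ∀ x, eval₂ k.subtype x f = 0 → x ∈ k) : IVP k := by
  intro f a b hab hneg
  have hf0 : f ≠ 0 := by rintro rfl; simp at hneg
  obtain ⟨c, h1, h2, h3⟩ := hR (f.map k.subtype) (k.subtype a) (k.subtype b) hab (by
    rw [eval_map, eval_map, eval₂_at_apply, eval₂_at_apply, ← map_mul]
    exact hneg)
  rw [eval_map] at h3
  have hc := hk f hf0 c h3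
  refine ⟨⟨c, hc⟩, h1, h2, ?_⟩
  have : eval₂ k.subtype (k.subtype ⟨c, hc⟩) f = 0 := h3
  rw [eval₂_at_apply] at this
  exact (map_eq_zero _).mp this

theorem real_closed_in [Algebra ℝ R] (x : R) (hx : IsAlgebraic ℝ x) :
    ∃ r : ℝ, algebraMap ℝ R r = x := by
  have hint : IsIntegral ℝ x := hx.isIntegral
  have hirr := minpoly.irreducible hint
  have hdeg := hirr.degree_le_two
  have hmon := minpoly.monic hint
  by_cases hroot : ∃ r, (minpoly ℝ x).IsRoot r
  · obtain ⟨r, hr⟩ := hroot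
    have h1 : (minpoly ℝ x).degree = 1 := degree_eq_one_of_irreducible_of_root hirr hr
    exact minpoly.mem_range_of_degree_eq_one ℝ x h1
  · exfalso
    apply hroot
    have hnd : (minpoly ℝ x).natDegree ≤ 2 := natDegree_le_of_degree_le hdeg
    obtain ⟨b, c, d, hbcd⟩ : ∃ b c d : ℝ, minpoly ℝ x = C b * X ^ 2 + C c * X + C d :=
      ⟨_, _, _, eq_quadratic_of_degree_le_two hdeg⟩
    have hev : algebraMap ℝ R b * x ^ 2 + algebraMap ℝ R c * x + algebraMap ℝ R d = 0 := by
      have := minpoly.aeval ℝ x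
      rw [hbcd] at this
      simpa using this
    have hb : b ≠ 0 := by
      rintro rfl
      have hle : (minpoly ℝ x).degree ≤ 1 := by rw [hbcd]; simpa using degree_linear_le
      have h1 : (minpoly ℝ x).degree = 1 := le_antisymm hle (by
        have := minpoly.natDegree_pos hint
        rw [degree_eq_natDegree hmon.ne_zero]
        exact_mod_cast this)
      exact hroot (exists_root_of_degree_eq_one h1)
    have hdisc : 0 ≤ discrim b c d := by
      by_contra hneg
      push Not at hneg
      have h1 : algebraMap ℝ R (discrim b c d) = (2 * algebraMap ℝ R b * x + algebraMap ℝ R c) ^ 2 := by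
        rw [discrim]; simp only [map_sub, map_mul, map_pow, map_ofNat]
        linear_combination (-4 * algebraMap ℝ R b) * hev
      have h2 : algebraMap ℝ R (discrim b c d) = - (algebraMap ℝ R (√(-discrim b c d))) ^ 2 := by
        rw [← map_pow, Real.sq_sqrt (by linarith), map_neg, neg_neg]
      have h3 : algebraMap ℝ R (√(-discrim b c d)) ≠ 0 := by
        rw [ne_eq, map_eq_zero]
        exact (Real.sqrt_pos.mpr (by linarith)).ne'
      have h4 : 0 < (algebraMap ℝ R (√(-discrim b c d))) ^ 2 := by positivity
      have h5 := sq_nonneg (2 * algebraMap ℝ R b * x + algebraMap ℝ R c)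
      linarith
    obtain ⟨r, hr⟩ := exists_quadratic_eq_zero hb ⟨√(discrim b c d), (Real.mul_self_sqrt hdisc).symm⟩
    refine ⟨r, ?_⟩
    rw [hbcd, IsRoot.def]
    simp
    linear_combination hr

theorem transfer [Algebra ℝ R] (hR : IVP R) (n : ℕ) (p : MvPolynomial (Fin n) ℝ) (s : Finset R) :
    ∀ x : Fin n → R, (∀ i, IsAlgebraic (IntermediateField.adjoin ℝ (s : Set R)) (x i)) →
      MvPolynomial.aeval x p = 0 → ∃ y : Fin n → ℝ, MvPolynomial.eval y p = 0 := by
  classical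
  induction s using Finset.induction_on with
  | empty =>
    intro x hx hp
    have h1 : ∀ i, ∃ r : ℝ, algebraMap ℝ R r = x i := by
      intro i
      apply real_closed_in
      have := hx i
      rw [Finset.coe_empty, IntermediateField.adjoin_empty] at this
      exact this.restrictScalars ℝ
    choose y hy using h1
    refine ⟨y, ?_⟩
    have : x = (algebraMap ℝ R) ∘ y := funext fun i => (hy i).symm
    rw [this] at hp
    have h2 := MvPolynomial.aeval_algebraMap_apply R y p
    rw [h2, map_eq_zero] at hp
    exact hp
  | insert t s hts ih =>
    intro x hx hp
    let F := IntermediateField.adjoin ℝ (s : Set R)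
    let K := algebraicClosure F R
    let k : Subfield R := K.toSubfield
    have hmemk : ∀ z, z ∈ k ↔ IsAlgebraic F z := fun z => mem_algebraicClosure_iff
    have hk : ∀ f : (↥k)[X], f ≠ 0 → ∀ x, eval₂ k.subtype x f = 0 → x ∈ k := by
      intro f hf z hz
      rw [hmemk]
      have : IsAlgebraic K z := ⟨f, hf, hz⟩
      exact this.restrictScalars F
    have hFk : ∀ z ∈ F, z ∈ k := by
      intro z hz
      rw [hmemk]
      exact isAlgebraic_algebraMap (⟨z, hz⟩ : F)
    have hRk : ∀ r : ℝ, algebraMap ℝ R r ∈ k := fun r => hFk _ (F.algebraMap_mem r)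
    have hx' : ∀ i, ∃ f : R[X], f ≠ 0 ∧ f.eval (x i) = 0 ∧
        ∀ m, f.coeff m ∈ Subfield.closure (insert t (k : Set R)) := by
      intro i
      obtain ⟨f, hf0, hf⟩ := hx i
      refine ⟨f.map (algebraMap _ R), ?_, ?_, ?_⟩
      · rw [ne_eq, Polynomial.map_eq_zero]; exact hf0
      · rw [eval_map]; exact hf
      · intro m
        rw [coeff_map]
        have h1 : (f.coeff m : R) ∈ Subfield.closure (Set.range (algebraMap ℝ R) ∪ ((insert t s : Finset R) : Set R)) :=
          (f.coeff m).2
        refine (Subfield.closure_le.mpr ?_) h1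
        rintro z (⟨r, rfl⟩ | hz)
        · exact Subfield.subset_closure (Set.mem_insert_of_mem _ (hRk r))
        · rw [Finset.coe_insert] at hz
          rcases hz with rfl | hz
          · exact Subfield.subset_closure (Set.mem_insert _ _)
          · exact Subfield.subset_closure (Set.mem_insert_of_mem _
              (hFk _ (IntermediateField.subset_adjoin ℝ _ hz)))
    by_cases ht : t ∈ k
    · refine ih x (fun i => (hmemk _).mp ?_) hp
      obtain ⟨f, hf0, hf, hfc⟩ := hx' i
      rw [Set.insert_eq_of_mem ht, Subfield.closure_eq] at hfc
      have hl : f ∈ lifts k.subtype := by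
        rw [lifts_iff_coeff_lifts]
        intro q
        exact ⟨⟨_, hfc q⟩, rfl⟩
      obtain ⟨g, hg⟩ := (mem_lifts _).mp hl
      exact hk g (by rintro rfl; simp at hg; exact hf0 hg.symm) _ (by rw [← eval_map, hg, hf])
    · let φ : ℝ →+* k := (algebraMap ℝ R).codRestrict k hRk
      have hφ : k.subtype.comp φ = algebraMap ℝ R := rfl
      obtain ⟨y, hy⟩ := trans_step hR k hk (IVP_subfield hR k hk) t ht n x hx' (MvPolynomial.map φ p) (by
        rw [MvPolynomial.eval₂_map, hφ]; exact hp)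
      refine ih (fun i => (y i : R)) (fun i => (hmemk _).mp (y i).2) ?_
      have h2 := congrArg k.subtype hy
      rw [MvPolynomial.eval_map, map_zero, MvPolynomial.eval₂_comp_left, hφ] at h2
      exact h2

end transfer
section descent
variable {F : Type*} [Field F] [LinearOrder F] [IsStrictOrderedRing F]

def SQ (F : Type*) [Field F] [LinearOrder F] [IsStrictOrderedRing F] : Submonoid F[X] where
  carrier := {s | ∃ (c : F) (g : F[X]), 0 ≤ c ∧ s = C c * g ^ 2}
  one_mem' := ⟨1, 1, zero_le_one, by simp⟩
  mul_mem' := by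
    rintro _ _ ⟨c, g, hc, rfl⟩ ⟨c', g', hc', rfl⟩
    exact ⟨c * c', g * g', mul_nonneg hc hc', by rw [C_mul]; ring⟩

theorem SQ_eval_nonneg (s : F[X]) (hs : s ∈ (SQ F).subsemiringClosure) (a : F) : 0 ≤ s.eval a := by
  rw [Submonoid.subsemiringClosure_mem] at hs
  induction hs using AddSubmonoid.closure_induction with
  | mem x hx =>
    obtain ⟨c, g, hc, rfl⟩ := hx
    rw [eval_mul, eval_C, eval_pow]
    positivity
  | zero => simp
  | add x y _ _ hx hy => rw [eval_add]; positivity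

theorem SQ_reduce (f : F[X]) (hf : f.natDegree ≠ 0) (s : F[X])
    (hs : s ∈ (SQ F).subsemiringClosure) :
    ∃ t ∈ (SQ F).subsemiringClosure, f ∣ s - t ∧ t.natDegree ≤ 2 * (f.natDegree - 1) := by
  have hs' := hs
  rw [Submonoid.subsemiringClosure_mem] at hs'
  induction hs' using AddSubmonoid.closure_induction with
  | mem x hx =>
    obtain ⟨c, g, hc, rfl⟩ := hx
    refine ⟨C c * (g % f) ^ 2, ?_, ?_, ?_⟩
    · rw [Submonoid.subsemiringClosure_mem]
      exact AddSubmonoid.subset_closure ⟨c, _, hc, rfl⟩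
    · have h1 : f ∣ g - g % f := by
        refine ⟨g / f, ?_⟩
        have := EuclideanDomain.div_add_mod g f
        linear_combination -this
      have : C c * g ^ 2 - C c * (g % f) ^ 2 = (g - g % f) * (C c * (g + g % f)) := by ring
      rw [this]
      exact h1.mul_right _
    · refine (natDegree_C_mul_le _ _).trans (natDegree_pow_le.trans ?_)
      have := natDegree_mod_lt g hf
      omega
  | zero => exact ⟨0, zero_mem _, by simp, by simp⟩
  | add x y hx hy ihx ihy =>
    obtain ⟨t, ht, h1, h2⟩ := ihx (by rw [Submonoid.subsemiringClosure_mem]; exact hx)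
    obtain ⟨t', ht', h1', h2'⟩ := ihy (by rw [Submonoid.subsemiringClosure_mem]; exact hy)
    refine ⟨t + t', add_mem ht ht', ?_, natDegree_add_le_of_degree_le h2 h2'⟩
    have : x + y - (t + t') = (x - t) + (y - t') := by ring
    rw [this]
    exact dvd_add h1 h1'

theorem descent (a b : F) (n : ℕ) : ∀ f : F[X], f.natDegree = n → f.eval a * f.eval b < 0 →
    ∀ s ∈ (SQ F).subsemiringClosure, ¬ f ∣ 1 + s := by
  induction n using Nat.strong_induction_on with
  | _ n ih =>
    intro f hfn hneg s hs hdvd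
    have hn : f.natDegree ≠ 0 := by
      intro h0
      rw [natDegree_eq_zero] at h0
      obtain ⟨c, rfl⟩ := h0
      simp only [eval_C] at hneg
      nlinarith [mul_self_nonneg c]
    obtain ⟨t, ht, h1, h2⟩ := SQ_reduce f hn s hs
    have h3 : f ∣ 1 + t := by
      have : 1 + t = (1 + s) - (s - t) := by ring
      rw [this]; exact dvd_sub hdvd h1
    obtain ⟨h, hh⟩ := h3
    have ea : f.eval a * h.eval a = 1 + t.eval a := by
      rw [← eval_mul, ← hh]; simp
    have eb : f.eval b * h.eval b = 1 + t.eval b := by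
      rw [← eval_mul, ← hh]; simp
    have ta := SQ_eval_nonneg t ht a
    have tb := SQ_eval_nonneg t ht b
    have hpos : 0 < (f.eval a * f.eval b) * (h.eval a * h.eval b) := by
      have : (f.eval a * f.eval b) * (h.eval a * h.eval b) = (1 + t.eval a) * (1 + t.eval b) := by
        rw [← ea, ← eb]; ring
      rw [this]; positivity
    have hneg' : h.eval a * h.eval b < 0 := by
      by_contra hc
      push Not at hc
      have := mul_nonpos_of_nonpos_of_nonneg hneg.le hc
      linarith
    have hf0 : f ≠ 0 := by rintro rfl; simp at hn
    have hh0 : h ≠ 0 := by rintro rfl; simp at hneg'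
    have hd : f.natDegree + h.natDegree ≤ 2 * (f.natDegree - 1) := by
      rw [← natDegree_mul hf0 hh0, ← hh]
      refine natDegree_add_le_of_degree_le (by simp) h2
    exact ih h.natDegree (by omega) h rfl hneg' t ht ⟨f, by rw [hh, mul_comm]⟩

theorem IVP_of_irreducible
    (H : ∀ f : F[X], Irreducible f → ∀ a b, f.eval a * f.eval b < 0 → ∃ r, f.eval r = 0) :
    IVP F := by
  suffices h : ∀ (n : ℕ) (f : F[X]), f.natDegree = n → ∀ a b, a ≤ b → f.eval a * f.eval b < 0 →
    ∃ c, a ≤ c ∧ c ≤ b ∧ f.eval c = 0 from fun f a b => h _ f rfl a b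
  intro n
  induction n using Nat.strong_induction_on with
  | _ n ih =>
    intro f hfn a b hab hneg
    have hf0 : f ≠ 0 := by rintro rfl; simp at hneg
    have hu : ¬ IsUnit f := by
      intro hu
      obtain ⟨c, hc, rfl⟩ := Polynomial.isUnit_iff.mp hu
      simp only [eval_C] at hneg
      nlinarith [mul_self_nonneg c]
    by_cases hirr : Irreducible f
    · obtain ⟨r, hr⟩ := H f hirr a b hneg
      have hdeg := degree_eq_one_of_irreducible_of_root hirr hr
      obtain ⟨g, hg⟩ := dvd_iff_isRoot.mpr hr
      have hg0 : g ≠ 0 := by rintro rfl; simp at hg; exact hf0 hg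
      have hgd : g.natDegree = 0 := by
        have h1 : f.natDegree = 1 := natDegree_eq_of_degree_eq_some hdeg
        rw [hg, natDegree_mul (X_sub_C_ne_zero r) hg0, natDegree_X_sub_C] at h1
        omega
      obtain ⟨c, rfl⟩ := natDegree_eq_zero.mp hgd
      rw [hg] at hneg
      simp only [eval_mul, eval_sub, eval_X, eval_C] at hneg
      have h2 : (a - r) * (b - r) < 0 := by
        by_contra hc
        push Not at hc
        nlinarith [mul_nonneg hc (mul_self_nonneg c)]
      refine ⟨r, ?_, ?_, hr⟩ <;> nlinarith
    · rw [irreducible_iff] at hirr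
      push Not at hirr
      obtain ⟨g, h, rfl, hg, hh⟩ := hirr hu
      have hg0 := left_ne_zero_of_mul hf0
      have hh0 := right_ne_zero_of_mul hf0
      have hgd : 0 < g.natDegree := natDegree_pos_iff_degree_pos.mpr (degree_pos_of_ne_zero_of_nonunit hg0 hg)
      have hhd : 0 < h.natDegree := natDegree_pos_iff_degree_pos.mpr (degree_pos_of_ne_zero_of_nonunit hh0 hh)
      rw [natDegree_mul hg0 hh0] at hfn
      have hcase : g.eval a * g.eval b < 0 ∨ h.eval a * h.eval b < 0 := by
        by_contra hc
        push Not at hc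
        rw [eval_mul, eval_mul] at hneg
        nlinarith [mul_nonneg hc.1 hc.2]
      rcases hcase with h1 | h1
      · obtain ⟨c, h2, h3, h4⟩ := ih _ (by omega) g rfl a b hab h1
        exact ⟨c, h2, h3, by rw [eval_mul, h4, zero_mul]⟩
      · obtain ⟨c, h2, h3, h4⟩ := ih _ (by omega) h rfl a b hab h1
        exact ⟨c, h2, h3, by rw [eval_mul, h4, mul_zero]⟩

end descent

section closure
variable {W : Type*} [Field W]

structure Good (P : Subsemiring W) : Prop where
  sq : ∀ x ∈ P, ∀ y ∈ P, (x - y) ^ 2 ∈ P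
  inv : ∀ x ∈ P, x⁻¹ ∈ P
  neg : (-1 : W) ∉ P

theorem Good.two {P : Subsemiring W} (h : Good P) : (2 : W) ≠ 0 := by
  intro h2
  apply h.neg
  have : (-1 : W) = 1 := by linear_combination -h2
  rw [this]; exact one_mem _

def Lf (P : Subsemiring W) (h : Good P) : Subfield W where
  carrier := {x | ∃ p ∈ P, ∃ q ∈ P, x = p - q}
  zero_mem' := ⟨0, zero_mem _, 0, zero_mem _, by simp⟩
  one_mem' := ⟨1, one_mem _, 0, zero_mem _, by simp⟩
  add_mem' := by
    rintro _ _ ⟨p, hp, q, hq, rfl⟩ ⟨p', hp', q', hq', rfl⟩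
    exact ⟨p + p', add_mem hp hp', q + q', add_mem hq hq', by ring⟩
  neg_mem' := by
    rintro _ ⟨p, hp, q, hq, rfl⟩
    exact ⟨q, hq, p, hp, by ring⟩
  mul_mem' := by
    rintro _ _ ⟨p, hp, q, hq, rfl⟩ ⟨p', hp', q', hq', rfl⟩
    exact ⟨p * p' + q * q', add_mem (mul_mem hp hp') (mul_mem hq hq'),
      p * q' + q * p', add_mem (mul_mem hp hq') (mul_mem hq hp'), by ring⟩
  inv_mem' := by
    rintro _ ⟨p, hp, q, hq, rfl⟩
    have h1 := h.inv _ (h.sq p hp q hq)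
    refine ⟨p * ((p - q) ^ 2)⁻¹, mul_mem hp h1, q * ((p - q) ^ 2)⁻¹, mul_mem hq h1, ?_⟩
    by_cases h0 : p - q = 0
    · simp [h0]
    · rw [← sub_mul]; field_simp

variable {P : Subsemiring W} (h : Good P) (hmax : ∀ Q, Good Q → P ≤ Q → Q ≤ P)

theorem P_le_L {x : W} (hx : x ∈ P) : x ∈ Lf P h := ⟨x, hx, 0, zero_mem _, by simp⟩

theorem L_sq {x : W} (hx : x ∈ Lf P h) : x ^ 2 ∈ P := by
  obtain ⟨p, hp, q, hq, rfl⟩ := hx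
  exact h.sq p hp q hq

theorem mem_L_of_sq (x : W) (h1 : ((x + 1) / 2) ^ 2 ∈ P) (h2 : ((x - 1) / 2) ^ 2 ∈ P) :
    x ∈ Lf P h := by
  refine ⟨_, h1, _, h2, ?_⟩
  have := h.two
  field_simp
  ring

theorem gen (hmax : ∀ Q, Good Q → P ≤ Q → Q ≤ P)
    (M : Subfield W) (Q : Subsemiring W) (hQM : ∀ x ∈ Q, x ∈ M) (hPQ : P ≤ Q)
    (hsq : ∀ m ∈ M, m ^ 2 ∈ Q) (h1 : (-1 : W) ∉ Q) : Q ≤ P := by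
  refine hmax Q ⟨fun x hx y hy => hsq _ (M.sub_mem (hQM _ hx) (hQM _ hy)), fun x hx => ?_, h1⟩ hPQ
  have : x⁻¹ = x * (x⁻¹) ^ 2 := by
    by_cases h0 : x = 0
    · simp [h0]
    · field_simp
  rw [this]
  exact mul_mem hx (hsq _ (M.inv_mem (hQM _ hx)))

theorem P_total (h : Good P) (hmax : ∀ Q, Good Q → P ≤ Q → Q ≤ P) {l : W} (hl : l ∈ Lf P h) :
    l ∈ P ∨ -l ∈ P := by
  by_contra hc
  push Not at hc
  obtain ⟨hc1, hc2⟩ := hc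
  let Q : Subsemiring W :=
    { carrier := {x | ∃ p ∈ P, ∃ q ∈ P, x = p - l * q}
      zero_mem' := ⟨0, zero_mem _, 0, zero_mem _, by simp⟩
      one_mem' := ⟨1, one_mem _, 0, zero_mem _, by simp⟩
      add_mem' := by
        rintro _ _ ⟨p, hp, q, hq, rfl⟩ ⟨p', hp', q', hq', rfl⟩
        exact ⟨p + p', add_mem hp hp', q + q', add_mem hq hq', by ring⟩
      mul_mem' := by
        rintro _ _ ⟨p, hp, q, hq, rfl⟩ ⟨p', hp', q', hq', rfl⟩
        exact ⟨p * p' + l ^ 2 * (q * q'), add_mem (mul_mem hp hp')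
          (mul_mem (L_sq h hl) (mul_mem hq hq')),
          p * q' + q * p', add_mem (mul_mem hp hq') (mul_mem hq hp'), by ring⟩ }
  have hPQ : P ≤ Q := fun x hx => ⟨x, hx, 0, zero_mem _, by simp⟩
  apply hc2
  refine gen hmax (Lf P h) Q ?_ hPQ (fun m hm => hPQ (L_sq h hm)) ?_ ⟨0, zero_mem _, 1, one_mem _, by simp⟩
  · rintro _ ⟨p, hp, q, hq, rfl⟩
    exact sub_mem (P_le_L h hp) (mul_mem hl (P_le_L h hq))
  · rintro ⟨p, hp, q, hq, e⟩
    have hq0 : q ≠ 0 := by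
      rintro rfl
      apply h.neg
      rw [e]; simpa using hp
    apply hc1
    have : l = (1 + p) * q⁻¹ := by
      field_simp
      linear_combination e
    rw [this]
    exact mul_mem (add_mem (one_mem _) hp) (h.inv _ hq)

theorem P_anti (h : Good P) {x : W} (h1 : x ∈ P) (h2 : -x ∈ P) : x = 0 := by
  by_contra h0
  apply h.neg
  have : (-1 : W) = -x * x⁻¹ := by field_simp
  rw [this]
  exact mul_mem h2 (h.inv _ h1)

theorem rc_aux [IsAlgClosed W] (h : Good P) (hmax : ∀ Q, Good Q → P ≤ Q → Q ≤ P) :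
    ∃ (_ : LinearOrder (Lf P h)) (_ : IsStrictOrderedRing (Lf P h)), IVP (Lf P h) := by
  classical
  let Cn : RingCone (Lf P h) :=
    { P.comap (Lf P h).subtype with
      eq_zero_of_mem_of_neg_mem' := by
        intro a h1 h2
        exact Subtype.ext (P_anti h h1 h2) }
  have hCn : ∀ x, x ∈ Cn ↔ (x : W) ∈ P := fun x => Iff.rfl
  haveI : HasMemOrNegMem Cn := ⟨fun a => P_total h hmax a.2⟩
  letI lo : LinearOrder (Lf P h) := LinearOrder.mkOfAddGroupCone Cn
  haveI : IsOrderedRing (Lf P h) := IsOrderedRing.mkOfCone Cn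
  haveI so : IsStrictOrderedRing (Lf P h) := IsOrderedRing.toIsStrictOrderedRing _
  refine ⟨lo, so, ?_⟩
  have hnn : ∀ x : Lf P h, 0 ≤ x ↔ (x : W) ∈ P := by
    intro x
    have : 0 ≤ x ↔ x - 0 ∈ Cn := Iff.rfl
    rw [this, sub_zero, hCn]
  apply IVP_of_irreducible
  intro f hf a b hneg
  obtain ⟨α, hα⟩ := IsAlgClosed.exists_aeval_eq_zero W f (degree_pos_of_irreducible hf).ne'
  have halg : IsAlgebraic (Lf P h) α := ⟨f, hf.ne_zero, hα⟩
  have hint := halg.isIntegral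
  have hfm : f ∣ minpoly (Lf P h) α :=
    (minpoly.irreducible hint).dvd_symm hf (minpoly.dvd _ _ hα)
  have hmem : ∀ m, m ∈ IntermediateField.adjoin (Lf P h) {α} ↔ ∃ g : (Lf P h)[X], aeval α g = m := by
    intro m
    rw [← IntermediateField.mem_toSubalgebra,
      IntermediateField.adjoin_simple_toSubalgebra_of_isAlgebraic halg,
      Algebra.adjoin_singleton_eq_range_aeval]
    rfl
  have hQ := gen hmax (IntermediateField.adjoin (Lf P h) {α}).toSubfield
    ((SQ (Lf P h)).subsemiringClosure.map (aeval α : (Lf P h)[X] →ₐ[Lf P h] W).toRingHom)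
    (by
      rintro _ ⟨s, hs, rfl⟩
      exact (hmem _).mpr ⟨s, rfl⟩)
    (by
      intro x hx
      refine ⟨C ⟨x, P_le_L h hx⟩ * 1 ^ 2, ?_, ?_⟩
      · exact AddSubmonoid.subset_closure ⟨_, _, (hnn _).mpr hx, rfl⟩
      · simp; rfl)
    (by
      intro m hm
      obtain ⟨g, rfl⟩ := (hmem m).mp hm
      refine ⟨C 1 * g ^ 2, ?_, ?_⟩
      · exact AddSubmonoid.subset_closure ⟨_, _, zero_le_one, rfl⟩
      · simp)
    (by
      rintro ⟨s, hs, e⟩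
      apply descent a b _ f rfl hneg s hs
      refine hfm.trans (minpoly.dvd _ _ ?_)
      have e' : aeval α s = (-1 : W) := e
      rw [map_add, map_one, e']; ring)
  have hsq : ∀ g : (Lf P h)[X], (aeval α g) ^ 2 ∈ P := by
    intro g
    apply hQ
    refine ⟨C 1 * g ^ 2, ?_, ?_⟩
    · exact AddSubmonoid.subset_closure ⟨_, _, zero_le_one, rfl⟩
    · simp
  have hαL : α ∈ Lf P h := by
    have h2 := h.two
    have e2 : algebraMap (Lf P h) W 2⁻¹ = 2⁻¹ := by rw [map_inv₀, map_ofNat]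
    apply mem_L_of_sq
    · have := hsq ((X + 1) * C 2⁻¹)
      rw [map_mul, aeval_C, e2, map_add, aeval_X, map_one] at this
      rwa [div_eq_mul_inv]
    · have := hsq ((X - 1) * C 2⁻¹)
      rw [map_mul, aeval_C, e2, map_sub, aeval_X, map_one] at this
      rwa [div_eq_mul_inv]
  refine ⟨⟨α, hαL⟩, ?_⟩
  have h3 : aeval (algebraMap (Lf P h) W ⟨α, hαL⟩) f = 0 := hα
  rw [aeval_algebraMap_apply] at h3
  have h4 := (map_eq_zero _).mp h3
  simpa using h4

theorem rc.{u} (K : Type u) [Field K] (hK : ¬ IsSumSq (-1 : K)) :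
    ∃ (R : Type u) (_ : Field R) (_ : LinearOrder R) (_ : IsStrictOrderedRing R),
      IVP R ∧ Nonempty (K →+* R) := by
  let W := AlgebraicClosure K
  let P0 : Subsemiring W := (Subsemiring.sumSq K).map (algebraMap K W)
  have hsq0 : ∀ x : K, (algebraMap K W x) ^ 2 ∈ P0 := by
    intro x
    refine ⟨x * x, by simp, by simp [sq]⟩
  have hP0 : Good P0 := by
    refine ⟨?_, ?_, ?_⟩
    · rintro _ ⟨x, hx, rfl⟩ _ ⟨y, hy, rfl⟩
      rw [← map_sub]
      exact hsq0 _
    · rintro _ ⟨x, hx, rfl⟩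
      have : (algebraMap K W x)⁻¹ = algebraMap K W x * (algebraMap K W x⁻¹) ^ 2 := by
        by_cases h0 : x = 0
        · simp [h0]
        · have : algebraMap K W x ≠ 0 := by simpa using h0
          rw [map_inv₀, sq, mul_inv_cancel_left₀ this]
      rw [this]
      exact mul_mem ⟨x, hx, rfl⟩ (hsq0 _)
    · rintro ⟨x, hx, e⟩
      apply hK
      have : x = -1 := (algebraMap K W).injective (by rw [map_neg, map_one]; exact e)
      rw [← this]
      simpa using hx
  obtain ⟨P, hP0P, hPmax⟩ := zorn_le_nonempty₀ {P : Subsemiring W | Good P} (by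
    intro c hc hch y hy
    have hdir := hch.directedOn
    have hm := fun x => @Subsemiring.mem_sSup_of_directedOn W _ c ⟨y, hy⟩ hdir x
    refine ⟨sSup c, ⟨?_, ?_, ?_⟩, fun z hz => le_sSup hz⟩
    · intro x hx x' hx'
      obtain ⟨A, hA, hxA⟩ := (hm x).mp hx
      obtain ⟨B, hB, hxB⟩ := (hm x').mp hx'
      obtain ⟨D, hD, h1, h2⟩ := hdir A hA B hB
      exact (hm _).mpr ⟨D, hD, (hc hD).sq _ (h1 hxA) _ (h2 hxB)⟩
    · intro x hx
      obtain ⟨A, hA, hxA⟩ := (hm x).mp hx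
      exact (hm _).mpr ⟨A, hA, (hc hA).inv _ hxA⟩
    · intro hx
      obtain ⟨A, hA, hxA⟩ := (hm _).mp hx
      exact (hc hA).neg hxA) P0 hP0
  have h : Good P := hPmax.prop
  obtain ⟨lo, so, hivp⟩ := rc_aux h (fun Q hQ hPQ => hPmax.le_of_ge hQ hPQ)
  refine ⟨Lf P h, inferInstance, lo, so, hivp, ⟨(algebraMap K W).codRestrict (Lf P h) ?_⟩⟩
  intro x
  apply mem_L_of_sq
  · apply hP0P
    have := hsq0 ((x + 1) / 2)
    rwa [map_div₀, map_add, map_one, map_ofNat] at this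
  · apply hP0P
    have := hsq0 ((x - 1) / 2)
    rwa [map_div₀, map_sub, map_one, map_ofNat] at this

end closure
section final

theorem IsSumSq.exists_fin {A : Type*} [CommRing A] {t : A} (ht : IsSumSq t) :
    ∃ (k : ℕ) (a : Fin k → A), t = ∑ i, a i ^ 2 := by
  induction ht with
  | zero => exact ⟨0, Fin.elim0, by simp⟩
  | sq_add a hs ih =>
    obtain ⟨k, b, rfl⟩ := ih
    exact ⟨k + 1, Fin.cons a b, by rw [Fin.sum_univ_succ]; simp [sq]⟩

theorem real_add {A : Type*} [CommRing A] {I : Ideal A} (hI : I.IsRealIdeal) {b t : A}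
    (ht : IsSumSq t) (h : b ^ 2 + t ∈ I) : b ∈ I := by
  obtain ⟨k, a, rfl⟩ := IsSumSq.exists_fin ht
  have := hI (k + 1) (Fin.cons b a) (by rw [Fin.sum_univ_succ]; simpa using h) 0
  simpa using this

theorem exists_real_prime {A : Type*} [CommRing A] [IsNoetherianRing A] (I : Ideal A)
    (hI : I.IsRealIdeal) (q : A) (hq : q ∉ I) :
    ∃ P : Ideal A, P.IsPrime ∧ I ≤ P ∧ P.IsRealIdeal ∧ q ∉ P := by
  have hsq : ∀ a, a ^ 2 ∈ I → a ∈ I := fun a ha => real_add hI IsSumSq.zero (by simpa using ha)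
  let J : A → Ideal A := fun s => Submodule.comap (LinearMap.mulLeft A s) I
  have hJ : ∀ s x, x ∈ J s ↔ s * x ∈ I := fun s x => Iff.rfl
  obtain ⟨M, ⟨s, hs, rfl⟩, hM⟩ := set_has_maximal_iff_noetherian.mpr (inferInstance : IsNoetherian A A)
    {M : Ideal A | ∃ s, s * q ∉ I ∧ M = J s} ⟨J 1, 1, by simpa using hq, rfl⟩
  have hmax : ∀ t, s * t * q ∉ I → J (s * t) ≤ J s := by
    intro t ht
    have hle : J s ≤ J (s * t) := by
      intro x hx
      rw [hJ] at hx ⊢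
      have : s * t * x = t * (s * x) := by ring
      rw [this]
      exact I.mul_mem_left _ hx
    by_contra hc
    exact hM _ ⟨s * t, ht, rfl⟩ (lt_of_le_not_ge hle hc)
  refine ⟨J s, ⟨?_, ?_⟩, ?_, ?_, hs⟩
  · intro h
    have : q ∈ J s := by rw [h]; trivial
    exact hs this
  · intro a b hab
    by_contra hc
    push Not at hc
    obtain ⟨ha, hb⟩ := hc
    by_cases h1 : s * a * q ∈ I
    · have h2 : s * q * q ∉ I := by
        intro h2
        apply hs
        apply hsq
        have : (s * q) ^ 2 = s * (s * q * q) := by ring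
        rw [this]; exact I.mul_mem_left _ h2
      apply ha
      apply hmax q h2
      rw [hJ]
      have : s * q * a = s * a * q := by ring
      rwa [this]
    · apply hb
      apply hmax a h1
      rw [hJ] at hab ⊢
      rwa [mul_assoc]
  · intro x hx
    exact I.mul_mem_left _ hx
  · intro k a ha i
    have := hI k (fun i => s * a i) (by
      rw [hJ] at ha
      have e : ∑ i, (s * a i) ^ 2 = s * (s * ∑ i, a i ^ 2) := by
        rw [← mul_assoc, Finset.mul_sum]
        exact Finset.sum_congr rfl fun i _ => by ring
      rw [e]; exact I.mul_mem_left _ ha) i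
    exact this

theorem frac_real {A : Type*} [CommRing A] (P : Ideal A) [P.IsPrime] (hP : P.IsRealIdeal) :
    ¬ IsSumSq (-1 : FractionRing (A ⧸ P)) := by
  let φ : A →+* FractionRing (A ⧸ P) := (algebraMap (A ⧸ P) _).comp (Ideal.Quotient.mk P)
  have hφ : ∀ a, φ a = 0 ↔ a ∈ P := by
    intro a
    rw [← Ideal.Quotient.eq_zero_iff_mem]
    exact (map_eq_zero_iff _ (IsFractionRing.injective (A ⧸ P) (FractionRing (A ⧸ P))))
  have hdiv : ∀ x, ∃ a b, b ∉ P ∧ x * φ b = φ a := by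
    intro x
    obtain ⟨a, b, hb, rfl⟩ := IsFractionRing.div_surjective (A := A ⧸ P) x
    obtain ⟨a, rfl⟩ := Ideal.Quotient.mk_surjective a
    obtain ⟨b, rfl⟩ := Ideal.Quotient.mk_surjective b
    have hb' : b ∉ P := by
      intro h
      rw [Ideal.Quotient.eq_zero_iff_mem.mpr h] at hb
      exact zero_notMem_nonZeroDivisors hb
    refine ⟨a, b, hb', ?_⟩
    have : φ b ≠ 0 := by rwa [ne_eq, hφ]
    exact div_mul_cancel₀ _ this
  have key : ∀ s : FractionRing (A ⧸ P), IsSumSq s →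
      ∃ t b, IsSumSq t ∧ b ∉ P ∧ s * φ b ^ 2 = φ t := by
    intro s hs
    induction hs with
    | zero => exact ⟨0, 1, IsSumSq.zero, fun h => ‹P.IsPrime›.ne_top ((Ideal.eq_top_iff_one _).mpr h), by simp⟩
    | sq_add x hs ih =>
      obtain ⟨t, b, ht, hb, e⟩ := ih
      obtain ⟨a, c, hc, e'⟩ := hdiv x
      refine ⟨(a * b) * (a * b) + t * (c * c), b * c, ?_, ?_, ?_⟩
      · exact IsSumSq.sq_add _ (ht.mul (IsSumSq.mul_self c))
      · intro h
        exact (‹P.IsPrime›.mem_or_mem h).elim hb hc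
      · simp only [map_add, map_mul, ← e, ← e']
        ring
  intro h
  obtain ⟨t, b, ht, hb, e⟩ := key _ h
  apply hb
  apply real_add hP ht
  rw [← hφ, map_add, map_pow, ← e]
  ring

theorem forward (d m : ℕ) (p : Fin m → MvPolynomial (Fin d) ℝ)
    (q : MvPolynomial (Fin d) ℝ)
    (H : ∀ a : Fin d → ℝ, (∀ i, MvPolynomial.eval a (p i) = 0) → MvPolynomial.eval a q = 0)
    (I : Ideal (MvPolynomial (Fin d) ℝ)) (hI : I.IsRealIdeal) (hp : ∀ i, p i ∈ I) : q ∈ I := by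
  classical
  by_contra hq
  obtain ⟨P, hPp, hIP, hPr, hqP⟩ := exists_real_prime I hI q hq
  obtain ⟨R, fR, lR, sR, hR, ⟨θ⟩⟩ := rc _ (frac_real P hPr)
  let ψ : MvPolynomial (Fin d) ℝ →+* R := θ.comp ((algebraMap (_ ⧸ P) _).comp (Ideal.Quotient.mk P))
  have hψ : ∀ a, ψ a = 0 ↔ a ∈ P := by
    intro a
    rw [← Ideal.Quotient.eq_zero_iff_mem]
    refine (map_eq_zero θ).trans ?_
    exact (map_eq_zero_iff _ (IsFractionRing.injective (_ ⧸ P) (FractionRing (_ ⧸ P))))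
  let _ : Algebra ℝ R := (ψ.comp MvPolynomial.C).toAlgebra
  have hψa : ∀ f, MvPolynomial.aeval (fun i => ψ (MvPolynomial.X i)) f = ψ f := by
    intro f
    have : ((MvPolynomial.aeval (fun i => ψ (MvPolynomial.X i)) :
        MvPolynomial (Fin d) ℝ →ₐ[ℝ] R) : MvPolynomial (Fin d) ℝ →+* R) = ψ := by
      apply MvPolynomial.ringHom_ext
      · intro r
        simp [RingHom.algebraMap_toAlgebra]
      · intro i
        simp
    exact congrArg (fun g : MvPolynomial (Fin d) ℝ →+* R => g f) this
  let x : Fin (d + 1) → R := Fin.cons (ψ q)⁻¹ (fun i => ψ (MvPolynomial.X i))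
  let rn : MvPolynomial (Fin d) ℝ →ₐ[ℝ] MvPolynomial (Fin (d + 1)) ℝ := MvPolynomial.rename Fin.succ
  let big : MvPolynomial (Fin (d + 1)) ℝ :=
    ∑ i, (rn (p i)) ^ 2 + (1 - rn q * MvPolynomial.X 0) ^ 2
  have hrn : ∀ f, MvPolynomial.aeval x (rn f) = ψ f := by
    intro f
    rw [← hψa, MvPolynomial.aeval_rename]
    rfl
  have hqne : ψ q ≠ 0 := by rwa [ne_eq, hψ]
  have hx0 : MvPolynomial.aeval x (MvPolynomial.X 0 : MvPolynomial (Fin (d + 1)) ℝ) = (ψ q)⁻¹ := by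
    rw [MvPolynomial.aeval_X]; rfl
  obtain ⟨y, hy⟩ := transfer hR (d + 1) big (Finset.univ.image x) x (by
    intro i
    have : x i ∈ IntermediateField.adjoin ℝ ((Finset.univ.image x : Finset R) : Set R) :=
      IntermediateField.subset_adjoin ℝ _ (by simp)
    exact isAlgebraic_algebraMap (⟨x i, this⟩ : IntermediateField.adjoin ℝ _)) (by
    simp only [big, map_add, map_sum, map_pow, map_sub, map_mul, map_one, hrn, hx0]
    rw [mul_inv_cancel₀ hqne]
    simp only [sub_self]
    rw [Finset.sum_eq_zero]
    · simp
    · intro i _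
      rw [(hψ _).mpr (hIP (hp i))]; simp)
  have hrn' : ∀ f, MvPolynomial.eval y (rn f) = MvPolynomial.eval (y ∘ Fin.succ) f := by
    intro f
    exact MvPolynomial.eval_rename _ _ _
  simp only [big, map_add, map_sum, map_pow, map_sub, map_mul, map_one, hrn', MvPolynomial.eval_X] at hy
  have h1 : 0 ≤ ∑ i, (MvPolynomial.eval (y ∘ Fin.succ) (p i)) ^ 2 :=
    Finset.sum_nonneg fun i _ => sq_nonneg _
  have h2 := sq_nonneg (1 - MvPolynomial.eval (y ∘ Fin.succ) q * y 0)
  have h3 : ∑ i, (MvPolynomial.eval (y ∘ Fin.succ) (p i)) ^ 2 = 0 := by linarith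
  have h4 : (1 - MvPolynomial.eval (y ∘ Fin.succ) q * y 0) ^ 2 = 0 := by linarith
  rw [Finset.sum_eq_zero_iff_of_nonneg (fun i _ => sq_nonneg _)] at h3
  have h5 := H (y ∘ Fin.succ) (fun i => pow_eq_zero_iff (two_ne_zero) |>.mp (h3 i (Finset.mem_univ _)))
  rw [h5] at h4
  norm_num at h4

end final

end RealNS

open MvPolynomial

/-- **Real Nullstellensatz (Theorem A).** -/
theorem real_nullstellensatz (d m : ℕ) (p : Fin m → MvPolynomial (Fin d) ℝ)
    (q : MvPolynomial (Fin d) ℝ) :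
    (∀ a : Fin d → ℝ, (∀ i, eval a (p i) = 0) → eval a q = 0) ↔
      (∀ I : Ideal (MvPolynomial (Fin d) ℝ),
        I.IsRealIdeal → (∀ i, p i ∈ I) → q ∈ I) := by
  constructor
  · intro H I hI hp
    exact RealNS.forward d m p q H I hI hp
  · intro H a ha
    have := H (RingHom.ker (eval a)) (by
      intro k b hb i
      rw [RingHom.mem_ker, map_sum] at hb
      simp only [map_pow] at hb
      rw [Finset.sum_eq_zero_iff_of_nonneg (fun i _ => sq_nonneg _)] at hb
      rw [RingHom.mem_ker]
      exact pow_eq_zero_iff (two_ne_zero) |>.mp (hb i (Finset.mem_univ _))) ha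
    exact this
end

section
/- (Theorem B, First Quaternionic Nullstellensatz) For any p₁, …, p_m, q ∈ ℍ_c[x₁, …, x_d] the following are equivalent: (1) for every point a ∈ ℝ^d such that p₁(a) = ⋯ = p_m(a) = 0 in ℍ, one has q(a) = 0; (2) q belongs to every real left ideal of ℍ_c[x₁, …, x_d] that contains p₁, …, p_m. -/
section
open MvPolynomial

/-- Evaluation of a quaternionic polynomial with central (commuting) variables at a real
point, performed componentwise. -/
noncomputable def evalQ {d : ℕ} (a : Fin d → ℝ) (p : Quaternion (MvPolynomial (Fin d) ℝ)) :
    Quaternion ℝ :=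
  ⟨eval a p.re, eval a p.imI, eval a p.imJ, eval a p.imK⟩

/-- A left ideal `I` of a ring `A` with involution `star` is *real* if whenever
`star (a 0) * a 0 + ⋯ + star (a (k-1)) * a (k-1) ∈ I`, each `a i` lies in `I`.
(Note that in Mathlib, `Ideal A` means a left ideal of `A`.) -/
def Ideal.IsRealLeftIdeal {A : Type*} [Ring A] [StarRing A] (I : Ideal A) : Prop :=
  ∀ (k : ℕ) (a : Fin k → A), (∑ i, star (a i) * a i) ∈ I → ∀ i, a i ∈ I
end

section
open Polynomial

/-- Intermediate value property for polynomials. -/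
def PolyIVT (L : Type*) [Field L] [LinearOrder L] : Prop :=
  ∀ (p : L[X]) (a b : L), a < b → p.eval a < 0 → 0 < p.eval b → ∃ c, a < c ∧ c < b ∧ p.eval c = 0

section
variable {L : Type*} [Field L] [LinearOrder L] [IsStrictOrderedRing L]

theorem PolyIVT.mul_neg (h : PolyIVT L) (p : L[X]) {a b : L} (hab : a < b)
    (hp : p.eval a * p.eval b < 0) : ∃ c, a < c ∧ c < b ∧ p.eval c = 0 := by
  rcases mul_neg_iff.1 hp with ⟨h1, h2⟩ | ⟨h1, h2⟩
  · obtain ⟨c, h3, h4, h5⟩ := h (-p) a b hab (by simpa using h1) (by simpa using h2)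
    exact ⟨c, h3, h4, by simpa using h5⟩
  · exact h p a b hab h1 h2

theorem PolyIVT.rolle0 (h : PolyIVT L) (p : L[X]) {a b : L} (hab : a < b) (hp0 : p ≠ 0)
    (ha : p.eval a = 0) (hb : p.eval b = 0) (hno : ∀ c, a < c → c < b → p.eval c ≠ 0) :
    ∃ c, a < c ∧ c < b ∧ (derivative p).eval c = 0 := by
  obtain ⟨q, hq, hqa⟩ := exists_eq_pow_rootMultiplicity_mul_and_not_dvd p hp0 a
  have hq0 : q ≠ 0 := by rintro rfl; simp at hqa
  obtain ⟨r, hr, hrb⟩ := exists_eq_pow_rootMultiplicity_mul_and_not_dvd q hq0 b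
  have hm : 0 < p.rootMultiplicity a := (rootMultiplicity_pos hp0).2 ha
  have hqb : q.eval b = 0 := by
    rw [hq] at hb
    simpa [sub_eq_zero, hab.ne'] using hb
  have hn : 0 < q.rootMultiplicity b := (rootMultiplicity_pos hq0).2 hqb
  obtain ⟨m, hm'⟩ := Nat.exists_eq_succ_of_ne_zero hm.ne'
  obtain ⟨n, hn'⟩ := Nat.exists_eq_succ_of_ne_zero hn.ne'
  rw [hm'] at hq
  rw [hn'] at hr
  rw [dvd_iff_isRoot, IsRoot.def] at hqa hrb
  have hra : r.eval a ≠ 0 := by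
    intro h0
    apply hqa
    rw [hr]; simp [h0]
  set s : L[X] := C ((m : L) + 1) * (X - C b) * r + C ((n : L) + 1) * (X - C a) * r
    + (X - C a) * (X - C b) * derivative r with hs
  have hp : p = (X - C a) ^ (m + 1) * ((X - C b) ^ (n + 1) * r) := by rw [hq]; rw [hr]
  have hder : derivative p = (X - C a) ^ m * (X - C b) ^ n * s := by
    rw [hp, hs]
    simp only [derivative_mul, derivative_X_sub_C_pow]
    simp
    ring
  have hrab : 0 < r.eval a * r.eval b := by
    by_contra hlt
    have hlt : r.eval a * r.eval b < 0 := lt_of_le_of_ne (not_lt.1 hlt) (mul_ne_zero hra hrb)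
    obtain ⟨c, h1, h2, h3⟩ := h.mul_neg r hab hlt
    apply hno c h1 h2
    rw [hp]; simp [h3]
  have hsa : s.eval a * s.eval b < 0 := by
    have e1 : s.eval a = ((m : L) + 1) * (a - b) * r.eval a := by simp [hs]
    have e2 : s.eval b = ((n : L) + 1) * (b - a) * r.eval b := by simp [hs]
    rw [e1, e2]
    have : ((m : L) + 1) * (a - b) * r.eval a * (((n : L) + 1) * (b - a) * r.eval b)
      = - ((((m : L) + 1) * ((n : L) + 1) * (b - a) ^ 2) * (r.eval a * r.eval b)) := by ring
    rw [this, neg_lt_zero]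
    have hba : 0 < b - a := sub_pos.2 hab
    positivity
  obtain ⟨c, h1, h2, h3⟩ := h.mul_neg s hab hsa
  exact ⟨c, h1, h2, by rw [hder]; simp [h3]⟩

theorem PolyIVT.rolle (h : PolyIVT L) (p : L[X]) {a b : L} (hab : a < b)
    (ha : p.eval a = 0) (hb : p.eval b = 0) :
    ∃ c, a < c ∧ c < b ∧ (derivative p).eval c = 0 := by
  by_cases hp0 : p = 0
  · subst hp0
    obtain ⟨c, h1, h2⟩ := exists_between hab
    exact ⟨c, h1, h2, by simp⟩
  classical
  let S := p.roots.toFinset.filter (fun x => a < x)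
  have hbS : b ∈ S := by simp [S, hp0, hab, hb]
  obtain ⟨b', hb', hmin⟩ := S.exists_min_image id ⟨b, hbS⟩
  simp only [id, S, Finset.mem_filter, Multiset.mem_toFinset, mem_roots hp0, IsRoot.def] at hb' hmin
  obtain ⟨c, h1, h2, h3⟩ := h.rolle0 p hb'.2 hp0 ha hb'.1 (fun c hc1 hc2 hc3 =>
    absurd (hmin c ⟨hc3, hc1⟩) (not_le.2 hc2))
  exact ⟨c, h1, h2.trans_le (hmin b ⟨hb, hab⟩), h3⟩

theorem PolyIVT.mvt (h : PolyIVT L) (p : L[X]) {a b : L} (hab : a < b) :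
    ∃ c, a < c ∧ c < b ∧ (derivative p).eval c * (b - a) = p.eval b - p.eval a := by
  have hba : b - a ≠ 0 := (sub_pos.2 hab).ne'
  obtain ⟨c, h1, h2, h3⟩ := h.rolle
    (p - C (p.eval a) - C ((p.eval b - p.eval a) / (b - a)) * (X - C a)) hab (by simp)
    (by simp; field_simp; ring)
  refine ⟨c, h1, h2, ?_⟩
  have : (derivative p).eval c = (p.eval b - p.eval a) / (b - a) := by
    simpa [sub_eq_zero] using h3
  rw [this]; field_simp

theorem poly_atTop : ∀ (n : ℕ) (p : L[X]), p.natDegree = n + 1 →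
    (∀ K : L, ∃ N, ∀ x, N ≤ x → K < p.eval x) ∨ (∀ K : L, ∃ N, ∀ x, N ≤ x → p.eval x < K) := by
  intro n
  induction n with
  | zero =>
    intro p hp
    have hp' := p.as_sum_range
    rw [hp] at hp'
    have hl : p.coeff 1 ≠ 0 := by
      have : p.leadingCoeff ≠ 0 := by
        rw [leadingCoeff_ne_zero]; rintro rfl; simp at hp
      rwa [leadingCoeff, hp] at this
    have he : ∀ x, p.eval x = p.coeff 0 + p.coeff 1 * x := by
      intro x; rw [hp']; simp [Finset.sum_range_succ]
    rcases lt_or_gt_of_ne hl with h | h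
    · right
      intro K
      refine ⟨(K - 1 - p.coeff 0) / p.coeff 1, fun x hx => ?_⟩
      rw [div_le_iff_of_neg h] at hx
      rw [he]; linarith
    · left
      intro K
      refine ⟨(K + 1 - p.coeff 0) / p.coeff 1, fun x hx => ?_⟩
      rw [div_le_iff₀ h] at hx
      rw [he]; linarith
  | succ n ih =>
    intro p hp
    have he : ∀ x, p.eval x = p.divX.eval x * x + p.coeff 0 := by
      intro x
      conv_lhs => rw [← divX_mul_X_add p]
      simp
    have hd : p.divX.natDegree = n + 1 := by rw [natDegree_divX_eq_natDegree_tsub_one, hp]; rfl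
    rcases ih _ hd with h | h
    · left
      intro K
      obtain ⟨N, hN⟩ := h (|K - p.coeff 0|)
      refine ⟨max N 1, fun x hx => ?_⟩
      have h1 := hN x (le_of_max_le_left hx)
      have h2 : 1 ≤ x := (le_of_max_le_right hx)
      have h3 := abs_nonneg (K - p.coeff 0)
      have h4 := le_abs_self (K - p.coeff 0)
      rw [he]; nlinarith
    · right
      intro K
      obtain ⟨N, hN⟩ := h (-|K - p.coeff 0|)
      refine ⟨max N 1, fun x hx => ?_⟩
      have h1 := hN x (le_of_max_le_left hx)
      have h2 : 1 ≤ x := (le_of_max_le_right hx)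
      have h3 := abs_nonneg (K - p.coeff 0)
      have h4 := neg_abs_le (K - p.coeff 0)
      rw [he]; nlinarith

theorem poly_atBot (p : L[X]) (hp : 0 < p.natDegree) :
    (∀ K : L, ∃ N, ∀ x, x ≤ N → K < p.eval x) ∨ (∀ K : L, ∃ N, ∀ x, x ≤ N → p.eval x < K) := by
  obtain ⟨n, hn⟩ := Nat.exists_eq_succ_of_ne_zero hp.ne'
  have h := poly_atTop n (p.comp (-X)) (by rw [natDegree_comp, natDegree_neg, natDegree_X, hn, mul_one])
  rcases h with h | h
  · left
    intro K
    obtain ⟨N, hN⟩ := h K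
    exact ⟨-N, fun x hx => by simpa using hN (-x) (by linarith)⟩
  · right
    intro K
    obtain ⟨N, hN⟩ := h K
    exact ⟨-N, fun x hx => by simpa using hN (-x) (by linarith)⟩

end
end

section
open Polynomial

section
variable {E : Type*} [Field E]

theorem isSumSq_map {A B : Type*} [Semiring A] [Semiring B] (f : A →+* B) {s : A}
    (h : IsSumSq s) : IsSumSq (f s) := by
  induction h with
  | zero => simp
  | sq_add a _ ih => rw [map_add, map_mul]; exact IsSumSq.sq_add _ ih

theorem exists_irred_sign [LinearOrder E] [IsStrictOrderedRing E] (a b : E) (h : E[X])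
    (hab : h.eval a * h.eval b < 0) :
    ∃ q, Irreducible q ∧ q ∣ h ∧ q.eval a * q.eval b < 0 := by
  induction h using WfDvdMonoid.induction_on_irreducible with
  | zero => simp at hab
  | unit u hu =>
    obtain ⟨c, hc, rfl⟩ := Polynomial.isUnit_iff.1 hu
    simp only [eval_C] at hab
    exact absurd hab (not_lt.2 (mul_self_nonneg c))
  | mul q i hq0 hi ih =>
    by_cases h1 : i.eval a * i.eval b < 0
    · exact ⟨i, hi, dvd_mul_right _ _, h1⟩
    · have : q.eval a * q.eval b < 0 := by
        simp only [eval_mul] at hab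
        by_contra h2
        have := mul_nonneg (not_lt.1 h1) (not_lt.1 h2)
        apply absurd hab (not_lt.2 _)
        convert this using 1; ring
      obtain ⟨r, hr, hd, hs⟩ := ih this
      exact ⟨r, hr, hd.mul_left _, hs⟩

theorem lift_sumSq (p : E[X]) (hp : p ≠ 0) (n : ℕ) (hn : p.natDegree = n + 1)
    {s : AdjoinRoot p} (hs : IsSumSq s) :
    ∃ S : E[X], IsSumSq S ∧ S.natDegree ≤ 2 * n ∧ AdjoinRoot.mk p S = s := by
  induction hs with
  | zero => exact ⟨0, by simp, by simp, by simp⟩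
  | sq_add a _ ih =>
    obtain ⟨S, h1, h2, h3⟩ := ih
    obtain ⟨f, rfl⟩ := AdjoinRoot.mk_surjective a
    refine ⟨(f % p) * (f % p) + S, IsSumSq.sq_add _ h1, ?_, ?_⟩
    · have : (f % p).natDegree < n + 1 := by
        rw [← hn]; exact natDegree_mod_lt _ (by omega)
      refine natDegree_add_le_of_degree_le ?_ h2
      refine natDegree_mul_le.trans (by omega)
    · rw [map_add, map_mul, h3]
      have : AdjoinRoot.mk p (f % p) = AdjoinRoot.mk p f := by
        rw [AdjoinRoot.mk_eq_mk, ← dvd_neg, neg_sub]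
        exact ⟨f / p, by rw [sub_eq_iff_eq_add, add_comm]; exact (EuclideanDomain.mod_add_div f p).symm⟩
      rw [this]

theorem fr_adjoin [LinearOrder E] [IsStrictOrderedRing E] (a b : E) :
    ∀ (n : ℕ) (p : E[X]), Irreducible p → p.natDegree ≤ n → p.eval a * p.eval b < 0 →
      ¬ IsSumSq (-1 : AdjoinRoot p) := by
  intro n
  induction n with
  | zero =>
    intro p hp hn
    exact absurd hp.natDegree_pos (by omega)
  | succ n ih =>
    intro p hp hn hab hs
    obtain ⟨k, hk⟩ := Nat.exists_eq_succ_of_ne_zero hp.natDegree_pos.ne'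
    obtain ⟨S, h1, h2, h3⟩ := lift_sumSq p hp.ne_zero k hk hs
    have hd : p ∣ S + 1 := by
      rw [← AdjoinRoot.mk_eq_zero, map_add, h3, map_one]; simp
    obtain ⟨h, hh⟩ := hd
    have hpos : ∀ x, 0 < p.eval x * h.eval x := by
      intro x
      rw [← eval_mul, ← hh]
      have : 0 ≤ S.eval x := (isSumSq_map (evalRingHom x) h1).nonneg
      simp only [eval_add, eval_one]; linarith
    have hh0 : h ≠ 0 := by
      rintro rfl
      simpa using hpos a
    have hdeg : h.natDegree ≤ n := by
      have : (S + 1).natDegree ≤ 2 * k := natDegree_add_le_of_degree_le h2 (by simp)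
      rw [hh, natDegree_mul hp.ne_zero hh0] at this
      omega
    have hsign : h.eval a * h.eval b < 0 := by
      have := mul_pos (hpos a) (hpos b)
      by_contra h2
      have := mul_nonpos_of_nonpos_of_nonneg hab.le (not_lt.1 h2)
      nlinarith
    obtain ⟨q, hq, hqd, hqs⟩ := exists_irred_sign a b h hsign
    refine ih q hq ((natDegree_le_of_dvd hqd hh0).trans hdeg) hqs ?_
    have e : AdjoinRoot.mk q S = -1 := by
      rw [eq_neg_iff_add_eq_zero, ← map_one (AdjoinRoot.mk q), ← map_add, AdjoinRoot.mk_eq_zero, hh]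
      exact hqd.mul_left _
    rw [← e]
    exact isSumSq_map _ h1

/-- maximal formally real -/
def MaxReal (E : Type*) [Field E] : Prop :=
  ¬ IsSumSq (-1 : E) ∧ ∀ p : E[X], Irreducible p → ¬ IsSumSq (-1 : AdjoinRoot p) → ∃ x, p.eval x = 0

theorem isSumSq_div {a t : E} (ha : IsSumSq a) (ht : IsSumSq t) : IsSumSq (a / t) := by
  by_cases h : t = 0
  · simp [h]
  have : a / t = (a * t) * (t⁻¹ * t⁻¹) := by field_simp
  rw [this]
  exact (ha.mul ht).mul (IsSumSq.mul_self _)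

theorem MaxReal.neg_sumSq (hE : MaxReal E) (a : E) (ha : ¬ IsSumSq a) : IsSumSq (-a) := by
  have hirr : Irreducible (X ^ 2 - C a) := by
    rw [irreducible_iff_roots_eq_zero_of_degree_le_three]
    · rw [Multiset.eq_zero_iff_forall_notMem]
      intro x hx
      have : (X ^ 2 - C a : E[X]) ≠ 0 := X_pow_sub_C_ne_zero (by norm_num) _
      rw [mem_roots this, IsRoot.def] at hx
      simp [sub_eq_zero] at hx
      apply ha; rw [← hx, sq]; exact IsSumSq.mul_self _
    · rw [natDegree_X_pow_sub_C]
    · rw [natDegree_X_pow_sub_C]; norm_num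
  have hs : IsSumSq (-1 : AdjoinRoot (X ^ 2 - C a)) := by
    by_contra h
    obtain ⟨x, hx⟩ := hE.2 _ hirr h
    simp [sub_eq_zero] at hx
    apply ha; rw [← hx, sq]; exact IsSumSq.mul_self _
  have key : ∀ s : AdjoinRoot (X ^ 2 - C a), IsSumSq s → ∃ u v w : E, IsSumSq u ∧ IsSumSq v ∧
      s = AdjoinRoot.mk _ (C (u + a * v) + C w * X) := by
    intro s hs
    induction hs with
    | zero => exact ⟨0, 0, 0, by simp⟩
    | sq_add z _ ih =>
      obtain ⟨u, v, w, hu, hv, rfl⟩ := ih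
      obtain ⟨f, rfl⟩ := AdjoinRoot.mk_surjective z
      obtain ⟨x, y, hxy⟩ : ∃ x y : E, AdjoinRoot.mk (X ^ 2 - C a) f = AdjoinRoot.mk _ (C x + C y * X) := by
        have h1 : (f % (X ^ 2 - C a)).natDegree < 2 := by
          conv_rhs => rw [← natDegree_X_pow_sub_C (R := E) (n := 2) (r := a)]
          exact natDegree_mod_lt _ (by rw [natDegree_X_pow_sub_C]; norm_num)
        have h2 := exists_eq_X_add_C_of_natDegree_le_one (Nat.lt_succ_iff.1 h1)
        obtain ⟨y, x, h2⟩ := h2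
        refine ⟨x, y, ?_⟩
        rw [AdjoinRoot.mk_eq_mk]
        refine ⟨f / (X ^ 2 - C a), ?_⟩
        conv_lhs => rw [← EuclideanDomain.mod_add_div f (X ^ 2 - C a)]
        rw [h2]; ring
      refine ⟨x * x + u, y * y + v, x * y + y * x + w, hu.sq_add _, hv.sq_add _, ?_⟩
      rw [hxy, ← map_mul, ← map_add, AdjoinRoot.mk_eq_mk]
      refine ⟨C y * C y, ?_⟩
      simp only [C_add, C_mul]
      ring
  obtain ⟨u, v, w, hu, hv, h⟩ := key _ hs
  have h2 : (X ^ 2 - C a) ∣ (C (u + a * v + 1) + C w * X : E[X]) := by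
    rw [← AdjoinRoot.mk_eq_zero]
    have : (C (u + a * v + 1) + C w * X : E[X]) = (C (u + a * v) + C w * X) + 1 := by
      simp only [C_add, C_mul, C_1]; ring
    rw [this, map_add, ← h, map_one]; simp
  have h3 : (C (u + a * v + 1) + C w * X : E[X]) = 0 := by
    apply eq_zero_of_dvd_of_natDegree_lt h2
    rw [natDegree_X_pow_sub_C, add_comm]
    exact lt_of_le_of_lt natDegree_linear_le (by norm_num)
  have h4 := congrArg (fun p => p.coeff 0) h3
  simp at h4
  have hv0 : v ≠ 0 := by
    rintro rfl
    apply hE.1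
    have : (-1 : E) = u := by linear_combination -h4
    rw [this]; exact hu
  have : -a = (u + 1) / v := by field_simp; linear_combination -h4
  rw [this]
  exact isSumSq_div (hu.add IsSumSq.one) hv

theorem MaxReal.exists_order (hE : MaxReal E) :
    ∃ (o : LinearOrder E), IsStrictOrderedRing E := by
  classical
  let C : RingCone E :=
    { Subsemiring.sumSq E with
      eq_zero_of_mem_of_neg_mem' := by
        intro a ha hna
        change a ∈ Subsemiring.sumSq E at ha
        change -a ∈ Subsemiring.sumSq E at hna
        rw [Subsemiring.mem_sumSq] at ha hna
        by_contra h0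
        apply hE.1
        have : (-1 : E) = (-a) / a := by field_simp
        rw [this]; exact isSumSq_div hna ha }
  haveI : HasMemOrNegMem C := ⟨by
    intro a
    change a ∈ Subsemiring.sumSq E ∨ -a ∈ Subsemiring.sumSq E
    rw [Subsemiring.mem_sumSq, Subsemiring.mem_sumSq]
    by_cases h : IsSumSq a
    · exact Or.inl h
    · exact Or.inr (hE.neg_sumSq a h)⟩
  letI o : LinearOrder E := LinearOrder.mkOfAddGroupCone C
  haveI : IsOrderedRing E := IsOrderedRing.mkOfCone C
  exact ⟨o, IsOrderedRing.toIsStrictOrderedRing E⟩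

theorem MaxReal.ivt (hE : MaxReal E) [LinearOrder E] [IsStrictOrderedRing E] : PolyIVT E := by
  intro p a b hab ha hb
  obtain ⟨q, hq, hqp, hqs⟩ := exists_irred_sign a b p (mul_neg_of_neg_of_pos ha hb)
  obtain ⟨r, hr⟩ := hE.2 q hq (fr_adjoin a b _ q hq le_rfl hqs)
  obtain ⟨u, hu⟩ := dvd_iff_isRoot.2 hr
  have hpr : p.eval r = 0 := by
    obtain ⟨v, rfl⟩ := hqp
    simp [hr]
  have hu1 : IsUnit u := by
    rcases hq.isUnit_or_isUnit hu with h | h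
    · exact absurd h (not_isUnit_X_sub_C r)
    · exact h
  obtain ⟨c, hc, rfl⟩ := Polynomial.isUnit_iff.1 hu1
  have h2 : (c * c) * ((a - r) * (b - r)) < 0 := by
    rw [hu] at hqs
    simp at hqs
    linarith
  have h3 : (a - r) * (b - r) < 0 := by
    by_contra h
    exact absurd h2 (not_lt.2 (mul_nonneg (mul_self_nonneg c) (not_lt.1 h)))
  rcases mul_neg_iff.1 h3 with ⟨h4, h5⟩ | ⟨h4, h5⟩
  · linarith
  · exact ⟨r, by linarith, by linarith, hpr⟩

theorem exists_maxReal (K : Type) [Field K] (hK : ¬ IsSumSq (-1 : K)) :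
    ∃ (L : Type) (_ : Field L) (_ : K →+* L), MaxReal L := by
  let Ω := AlgebraicClosure K
  have equivlem : ∀ {A B : Type} [Field A] [Field B] (e : A ≃+* B), ¬ IsSumSq (-1 : A) →
      ¬ IsSumSq (-1 : B) := by
    intro A B _ _ e h hB
    apply h
    have := isSumSq_map e.symm.toRingHom hB
    simpa using this
  have hx : ¬ IsSumSq (-1 : (algebraMap K Ω).fieldRange) := 
    equivlem (RingHom.rangeRestrictFieldEquiv (algebraMap K Ω)) hK
  obtain ⟨m, hxm, hm⟩ := zorn_le_nonempty₀ {F : Subfield Ω | ¬ IsSumSq (-1 : F)} (by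
    intro c hc hch y hy
    refine ⟨sSup c, ?_, fun z hz => le_sSup hz⟩
    have hdir : DirectedOn (· ≤ ·) c := hch.directedOn
    have key : ∀ s : (sSup c : Subfield Ω), IsSumSq s → ∃ F ∈ c, ∃ s' : F, (s' : Ω) = s ∧ IsSumSq s' := by
      intro s hs
      induction hs with
      | zero => exact ⟨y, hy, 0, by simp, IsSumSq.zero⟩
      | sq_add a _ ih =>
        obtain ⟨F, hF, s', h1, h2⟩ := ih
        obtain ⟨G, hG, haG⟩ := (Subfield.mem_sSup_of_directedOn ⟨y, hy⟩ hdir).1 a.2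
        obtain ⟨H, hH, hFH, hGH⟩ := hdir F hF G hG
        refine ⟨H, hH, (⟨a, hGH haG⟩ : H) * ⟨a, hGH haG⟩ + Subfield.inclusion hFH s', ?_, ?_⟩
        · simp [← h1]; rfl
        · exact IsSumSq.sq_add _ (isSumSq_map _ h2)
    intro h
    obtain ⟨F, hF, s', h1, h2⟩ := key _ h
    apply hc hF
    have : s' = -1 := by ext; simpa using h1
    rwa [this] at h2) _ hx
  refine ⟨m, inferInstance, (Subfield.inclusion hxm).comp (algebraMap K Ω).rangeRestrictField, hm.prop, ?_⟩
  intro p hp hpr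
  haveI : Fact (Irreducible p) := ⟨hp⟩
  obtain ⟨α, hα⟩ := IsAlgClosed.exists_eval₂_eq_zero m.subtype p (by
    have := Polynomial.degree_pos_of_irreducible hp
    exact this.ne')
  let f : AdjoinRoot p →+* Ω := AdjoinRoot.lift m.subtype α hα
  have h1 : ¬ IsSumSq (-1 : f.fieldRange) := equivlem (RingHom.rangeRestrictFieldEquiv f) hpr
  have h2 : m ≤ f.fieldRange := by
    intro z hz
    exact ⟨AdjoinRoot.of p ⟨z, hz⟩, by simp [f]⟩
  have h3 : f.fieldRange ≤ m := hm.le_of_ge h1 h2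
  have h4 : α ∈ m := h3 ⟨AdjoinRoot.root p, by simp [f]⟩
  refine ⟨⟨α, h4⟩, ?_⟩
  apply m.subtype_injective
  have := Polynomial.eval₂_at_apply (p := p) m.subtype (⟨α, h4⟩ : m)
  rw [map_zero, ← this]
  exact hα
end
end

section
open Polynomial

section
variable {L M : Type} [Field L] [LinearOrder L] [IsStrictOrderedRing L]
  [Field M] [LinearOrder M] [IsStrictOrderedRing M]

def Sim (T : Set (L × M)) (y : L) (b : M) : Prop :=
  ∀ t ∈ T, (y < t.1 ↔ b < t.2) ∧ (t.1 < y ↔ t.2 < b)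

def swapT (T : Set (L × M)) : Set (M × L) := {t | (t.2, t.1) ∈ T}

theorem Sim.swap {T : Set (L × M)} {y : L} {b : M} (h : Sim T y b) : Sim (swapT T) b y := by
  rintro ⟨t1, t2⟩ ht
  have := h _ ht
  exact ⟨this.1.symm, this.2.symm⟩

theorem Sim.unswap {T : Set (L × M)} {y : L} {b : M} (h : Sim (swapT T) b y) : Sim T y b := by
  rintro ⟨t1, t2⟩ ht
  have := h (t2, t1) ht
  exact ⟨this.1.symm, this.2.symm⟩

theorem Sim.comp {T : Set (L × M)} {y y' : L} {b b' : M} (h1 : Sim T y b') (h2 : Sim T y' b)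
    (h3 : Sim T y b) : Sim T y' b' := by
  intro t ht
  have a1 := h1 t ht
  have a2 := h2 t ht
  have a3 := h3 t ht
  exact ⟨a2.1.trans (a3.1.symm.trans a1.1), a2.2.trans (a3.2.symm.trans a1.2)⟩

theorem Sim.convex {T : Set (L × M)} {y : L} {b b' c : M} (h1 : Sim T y b) (h2 : Sim T y b')
    (hc1 : b ≤ c) (hc2 : c ≤ b') : Sim T y c := by
  intro t ht
  have a1 := h1 t ht
  have a2 := h2 t ht
  refine ⟨⟨fun h => hc2.trans_lt (a2.1.1 h), fun h => a1.1.2 (hc1.trans_lt h)⟩,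
    ⟨fun h => (a1.2.1 h).trans_le hc1, fun h => a2.2.2 (h.trans_le hc2)⟩⟩

theorem Sim.eq_of_mem {T : Set (L × M)} {y : L} {b : M} (h : Sim T y b) {t : L × M} (ht : t ∈ T)
    (hy : t.1 = y) : t.2 = b := by
  have := h t ht
  rw [hy] at this
  simp only [lt_irrefl, false_iff, not_lt] at this
  exact le_antisymm this.1 this.2

def PI (T : Set (L × M)) : Prop := ∀ s ∈ T, Sim T s.1 s.2

theorem PI.exists_sim {T : Set (L × M)} (hT : PI T) (hf : T.Finite) (y : L) : ∃ b, Sim T y b := by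
  let f : Order.PartialIso L M := ⟨hf.toFinset, by
    intro p hp q hq
    rw [Set.Finite.mem_toFinset] at hp hq
    have := hT p hp q hq
    rcases lt_trichotomy p.1 q.1 with h | h | h
    · rw [cmp_eq_lt_iff _ _ |>.2 h, cmp_eq_lt_iff _ _ |>.2 (this.1.1 h)]
    · have h' : q.2 = p.2 := (hT p hp).eq_of_mem hq h.symm
      rw [cmp_eq_eq_iff _ _ |>.2 h, cmp_eq_eq_iff _ _ |>.2 h'.symm]
    · rw [cmp_eq_gt_iff _ _ |>.2 h, cmp_eq_gt_iff _ _ |>.2 (this.2.1 h)]⟩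
  obtain ⟨b, hb⟩ := Order.PartialIso.exists_across f y
  refine ⟨b, fun t ht => ?_⟩
  have := hb t (by simpa [f] using ht)
  refine ⟨?_, ?_⟩
  · rw [← cmp_eq_gt_iff, ← cmp_eq_gt_iff, this]
  · rw [← cmp_eq_lt_iff, ← cmp_eq_lt_iff, this]

theorem PI.swap {T : Set (L × M)} (hT : PI T) : PI (swapT T) := by
  rintro ⟨a, b⟩ hs
  exact (hT (b, a) hs).swap

theorem swapT_finite {T : Set (L × M)} (hT : T.Finite) : (swapT T).Finite := by
  have : swapT T = Prod.swap ⁻¹' T := rfl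
  rw [this]
  exact hT.preimage Prod.swap_injective.injOn

/-- neighbourhood inside the cell -/
theorem Sim.nbhd {T : Set (L × M)} (hf : T.Finite) {y : L} {b : M} (h : Sim T y b)
    (hy : ∀ t ∈ T, t.1 ≠ y) : ∃ a c, a < y ∧ y < c ∧ Sim T a b ∧ Sim T c b := by
  classical
  let lo := (hf.toFinset.image Prod.fst).filter (fun x => x < y)
  let hi := (hf.toFinset.image Prod.fst).filter (fun x => y < x)
  obtain ⟨a, ha1, ha2⟩ := Order.exists_between_finsets lo {y} (by simp [lo])
  obtain ⟨c, hc1, hc2⟩ := Order.exists_between_finsets {y} hi (by simp [hi])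
  have hay : a < y := ha2 y (by simp)
  have hyc : y < c := hc1 y (by simp)
  have ha1 : ∀ t ∈ T, t.1 < y → t.1 < a := fun t ht hty => ha1 t.1 (by
    simp only [lo, Finset.mem_filter, Finset.mem_image, Set.Finite.mem_toFinset]
    exact ⟨⟨t, ht, rfl⟩, hty⟩)
  have hc2 : ∀ t ∈ T, y < t.1 → c < t.1 := fun t ht hty => hc2 t.1 (by
    simp only [hi, Finset.mem_filter, Finset.mem_image, Set.Finite.mem_toFinset]
    exact ⟨⟨t, ht, rfl⟩, hty⟩)
  refine ⟨a, c, hay, hyc, fun t ht => ?_, fun t ht => ?_⟩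
  · rw [← (h t ht).1, ← (h t ht).2]
    refine ⟨⟨fun h1 => ?_, fun h1 => hay.trans h1⟩, ⟨fun h1 => h1.trans hay, fun h1 => ha1 t ht h1⟩⟩
    rcases lt_or_gt_of_ne (hy t ht) with h2 | h2
    · exact absurd h1 (ha1 t ht h2).asymm
    · exact h2
  · rw [← (h t ht).1, ← (h t ht).2]
    refine ⟨⟨fun h1 => hyc.trans h1, fun h1 => hc2 t ht h1⟩, ⟨fun h1 => ?_, fun h1 => h1.trans hyc⟩⟩
    rcases lt_or_gt_of_ne (hy t ht) with h2 | h2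
    · exact h2
    · exact absurd h1 (hc2 t ht h2).asymm

variable {F : Type} [Field F]

structure Good (φ : F →+* L) (ψ : F →+* M) (T : Set (L × M)) (S : Set F[X]) : Prop where
  pi : PI T
  fin : T.Finite
  sgn : ∀ y b, Sim T y b → ∀ p ∈ S,
    SignType.sign ((p.map φ).eval y) = SignType.sign ((p.map ψ).eval b)

variable {φ : F →+* L} {ψ : F →+* M} {T : Set (L × M)} {S : Set F[X]}

theorem Good.swap (h : Good φ ψ T S) : Good ψ φ (swapT T) S :=
  ⟨h.pi.swap, swapT_finite h.fin, fun y b hs p hp => (h.sgn _ _ hs.unswap p hp).symm⟩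

theorem Good.mono (h : Good φ ψ T S) {S' : Set F[X]} (hS : S' ⊆ S) : Good φ ψ T S' :=
  ⟨h.pi, h.fin, fun y b hs p hp => (h.sgn _ _ hs p (hS hp))⟩

theorem Good.roots_mem (h : Good φ ψ T S) {q : F[X]} (hq : q ∈ S) (hq0 : q ≠ 0) {y : L}
    (hy : (q.map φ).eval y = 0) : ∃ t ∈ T, t.1 = y := by
  by_contra hno
  push Not at hno
  obtain ⟨b, hb⟩ := h.pi.exists_sim h.fin y
  obtain ⟨a, c, hay, hyc, ha, hc⟩ := hb.nbhd h.fin hno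
  have h0 : q.map φ ≠ 0 := (Polynomial.map_ne_zero_iff φ.injective).2 hq0
  have hsub : Set.Ioo a c ⊆ {x | (q.map φ).IsRoot x} := by
    intro x hx
    have hx' : Sim T x b := (ha.swap.convex hc.swap hx.1.le hx.2.le).unswap
    have e1 := h.sgn _ _ hx' q hq
    have e2 := h.sgn _ _ hb q hq
    rw [← e2, hy, sign_zero, sign_eq_zero_iff] at e1
    exact e1
  have : (Set.Ioo a c).Infinite := Set.Ioo_infinite (hay.trans hyc)
  exact this ((Polynomial.finite_setOfPred_isRoot h0).subset hsub)

theorem PolyIVT.sign_const (hM : PolyIVT M) (p : M[X]) (u v : M)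
    (h : ∀ c, p.eval c = 0 → (u < c ↔ v < c) ∧ (c < u ↔ c < v) ∧ c ≠ u ∧ c ≠ v) :
    SignType.sign (p.eval u) = SignType.sign (p.eval v) := by
  have hu : p.eval u ≠ 0 := fun h0 => (h u h0).2.2.1 rfl
  have hv : p.eval v ≠ 0 := fun h0 => (h v h0).2.2.2 rfl
  have hpos : 0 < p.eval u * p.eval v := by
    by_contra hneg
    have hneg : p.eval u * p.eval v < 0 := lt_of_le_of_ne (not_lt.1 hneg) (mul_ne_zero hu hv)
    rcases lt_trichotomy u v with h1 | h1 | h1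
    · obtain ⟨c, h2, h3, h4⟩ := hM.mul_neg p h1 hneg
      exact absurd ((h c h4).1.1 h2) h3.asymm
    · subst h1; exact absurd hneg (not_lt.2 (mul_self_nonneg _))
    · obtain ⟨c, h2, h3, h4⟩ := hM.mul_neg p h1 (by rwa [mul_comm])
      exact absurd ((h c h4).1.2 h2) h3.asymm
  rcases mul_pos_iff.1 hpos with ⟨h1, h2⟩ | ⟨h1, h2⟩
  · rw [sign_pos h1, sign_pos h2]
  · rw [sign_neg h1, sign_neg h2]

theorem Good.trim (hM : PolyIVT M) (h : Good φ ψ T S) {S' : Set F[X]} (hS : S' ⊆ S) :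
    Good φ ψ {t ∈ T | ∃ q ∈ S', q ≠ 0 ∧ (q.map φ).eval t.1 = 0} S' := by
  refine ⟨fun s hs t ht => h.pi s hs.1 t ht.1, h.fin.subset (fun t ht => ht.1), ?_⟩
  intro y b hyb p hp
  by_cases hp0 : p = 0
  · simp [hp0]
  by_cases hy : ∃ t ∈ T, (∃ q ∈ S', q ≠ 0 ∧ (q.map φ).eval t.1 = 0) ∧ t.1 = y
  · obtain ⟨t, ht, hq, hty⟩ := hy
    have := hyb.eq_of_mem ⟨ht, hq⟩ hty
    apply h.sgn _ _ _ p (hS hp)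
    rw [← this, ← hty]; exact h.pi t ht
  obtain ⟨b0, hb0⟩ := h.pi.exists_sim h.fin y
  rw [h.sgn _ _ hb0 p (hS hp)]
  apply hM.sign_const
  intro c hc
  obtain ⟨t, ht, htc⟩ := h.swap.roots_mem (hS hp) hp0 hc
  have ht' : (t.2, t.1) ∈ T := ht
  have ht0 : (p.map φ).eval t.2 = 0 := by
    have := h.sgn _ _ (h.pi _ ht') p (hS hp)
    simp only [htc, hc, sign_zero, sign_eq_zero_iff] at this
    exact this
  have a1 := hyb (t.2, t.1) ⟨ht', p, hp, hp0, ht0⟩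
  have a2 := hb0 (t.2, t.1) ht'
  simp only [htc] at a1 a2
  refine ⟨a2.1.symm.trans a1.1, a2.2.symm.trans a1.2, ?_, ?_⟩
  · rintro rfl
    simp only [lt_irrefl, iff_false, not_lt] at a2
    exact hy ⟨_, ht', ⟨p, hp, hp0, ht0⟩, le_antisymm a2.1 a2.2⟩
  · rintro rfl
    simp only [lt_irrefl, iff_false, not_lt] at a1
    exact hy ⟨_, ht', ⟨p, hp, hp0, ht0⟩, le_antisymm a1.1 a1.2⟩
end
end

section
open Polynomial

section
variable {L M : Type} [Field L] [LinearOrder L] [IsStrictOrderedRing L]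
  [Field M] [LinearOrder M] [IsStrictOrderedRing M]
variable {F : Type} [Field F]
variable {φ : F →+* L} {ψ : F →+* M} {T : Set (L × M)} {S : Set F[X]}

theorem PolyIVT.incr (hM : PolyIVT M) (p : M[X]) {u v : M} (huv : u < v)
    (h : ∀ c, u < c → c < v → 0 < (derivative p).eval c) : p.eval u < p.eval v := by
  obtain ⟨c, h1, h2, h3⟩ := hM.mvt p huv
  have := mul_pos (h c h1 h2) (sub_pos.2 huv)
  linarith

theorem PolyIVT.decr (hM : PolyIVT M) (p : M[X]) {u v : M} (huv : u < v)
    (h : ∀ c, u < c → c < v → (derivative p).eval c < 0) : p.eval v < p.eval u := by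
  obtain ⟨c, h1, h2, h3⟩ := hM.mvt p huv
  have := mul_neg_of_neg_of_pos (h c h1 h2) (sub_pos.2 huv)
  linarith

theorem Sim.left_ext {y : L} {b v : M} (h : Sim T y b) (hb : ∀ t ∈ T, t.1 ≠ y) (hv : v ≤ b)
    (hl : ∀ t ∈ T, t.2 < b → t.2 < v) : Sim T y v := by
  intro t ht
  have a := h t ht
  refine ⟨⟨fun h1 => hv.trans_lt (a.1.1 h1), fun h1 => ?_⟩,
    ⟨fun h1 => hl t ht (a.2.1 h1), fun h1 => a.2.2 (h1.trans_le hv)⟩⟩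
  rcases lt_or_gt_of_ne (hb t ht) with h2 | h2
  · exact absurd h1 (hl t ht (a.2.1 h2)).asymm
  · exact h2

theorem Sim.right_ext {y : L} {b v : M} (h : Sim T y b) (hb : ∀ t ∈ T, t.1 ≠ y) (hv : b ≤ v)
    (hl : ∀ t ∈ T, b < t.2 → v < t.2) : Sim T y v := by
  intro t ht
  have a := h t ht
  refine ⟨⟨fun h1 => hl t ht (a.1.1 h1), fun h1 => a.1.2 (hv.trans_lt h1)⟩,
    ⟨fun h1 => (a.2.1 h1).trans_le hv, fun h1 => ?_⟩⟩
  rcases lt_or_gt_of_ne (hb t ht) with h2 | h2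
  · exact h2
  · exact absurd h1 (hl t ht (a.1.1 h2)).asymm

/-- hypotheses of the step -/
structure StepHyp (φ : F →+* L) (ψ : F →+* M) (T : Set (L × M)) (S : Set F[X]) (p : F[X]) : Prop where
  good : Good φ ψ T S
  ivL : PolyIVT L
  ivM : PolyIVT M
  deg : 0 < p.natDegree
  der : derivative p ∈ S
  pts : ∀ t ∈ T, SignType.sign ((p.map φ).eval t.1) = SignType.sign ((p.map ψ).eval t.2)

variable {p : F[X]}

theorem StepHyp.swap (h : StepHyp φ ψ T S p) : StepHyp ψ φ (swapT T) S p :=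
  ⟨h.good.swap, h.ivM, h.ivL, h.deg, h.der, fun t ht => (h.pts (t.2, t.1) ht).symm⟩

theorem sign_eq_pos {a : L} {b : M} (h : SignType.sign a = SignType.sign b) (hb : 0 < b) : 0 < a := by
  rw [sign_pos hb] at h; exact sign_eq_one_iff.1 h

theorem sign_eq_neg {a : L} {b : M} (h : SignType.sign a = SignType.sign b) (hb : b < 0) : a < 0 := by
  rw [sign_neg hb] at h; exact sign_eq_neg_one_iff.1 h

theorem StepHyp.der_ne (h : StepHyp φ ψ T S p) : derivative p ≠ 0 := by
  intro h0
  haveI : CharZero F := (RingHom.charZero_iff φ.injective).2 inferInstance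
  have := derivative_eq_zero.1 h0
  exact h.deg.ne' this

theorem StepHyp.neg_inc (h : StepHyp φ ψ T S p) {y : L} {b : M} (hs : Sim T y b)
    (hy : ∀ t ∈ T, t.1 ≠ y) (hd : 0 < (derivative (p.map φ)).eval y)
    {u : L} (hu : Sim T u b) (hu0 : (p.map φ).eval u < 0) : ∃ v, Sim T y v ∧ (p.map ψ).eval v < 0 := by
  by_contra hcon
  push Not at hcon
  have hdM : ∀ v, Sim T y v → 0 < (derivative (p.map ψ)).eval v := by
    intro v hv
    have := h.good.sgn _ _ hv _ h.der
    rw [derivative_map] at hd ⊢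
    exact sign_eq_pos this.symm hd
  have hdL : ∀ v, Sim T v b → 0 < (derivative (p.map φ)).eval v := by
    intro v hv
    have := h.good.sgn _ _ hv _ h.der
    have h2 := hdM b hs
    rw [derivative_map] at h2 ⊢
    exact sign_eq_pos this h2
  have hb : ∀ t ∈ T, t.2 ≠ b := fun t ht e => hy t ht (hs.swap.eq_of_mem (t := (t.2, t.1)) ht e)
  have huT : ∀ t ∈ T, t.1 ≠ u := fun t ht e => hb t ht (hu.eq_of_mem ht e)
  by_cases hleft : ∃ t ∈ T, t.2 < b
  · obtain ⟨t, ⟨ht, htb⟩, hmax⟩ := Set.exists_max_image {t ∈ T | t.2 < b} Prod.snd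
      (h.good.fin.subset (fun t ht => ht.1)) (by obtain ⟨t, h1, h2⟩ := hleft; exact ⟨t, h1, h2⟩)
    have hmax' : ∀ s ∈ T, s.1 < u → s.1 ≤ t.1 := by
      intro s hsT hsu
      have := hmax s ⟨hsT, (hu s hsT).2.1 hsu⟩
      have a := h.good.pi s hsT t ht
      by_contra h2
      exact absurd (a.2.1 (not_le.1 h2)) (not_lt.2 this)
    have htu : t.1 < u := (hu t ht).2.2 htb
    have e1 : (p.map φ).eval t.1 < (p.map φ).eval u := by
      apply h.ivL.incr _ htu
      intro c hc1 hc2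
      apply hdL
      apply Sim.unswap
      exact hu.swap.left_ext (fun s hs => hb (s.2, s.1) hs) hc2.le
        (fun s hsT hsc => (hmax' (s.2, s.1) hsT hsc).trans_lt hc1)
    have e2 : (p.map ψ).eval t.2 < 0 := sign_eq_neg (h.pts t ht).symm (e1.trans hu0)
    have hcell : ∀ v, t.2 < v → v ≤ b → Sim T y v := fun v h1 h2 =>
      hs.left_ext hy h2 (fun s hsT hsb => (hmax s ⟨hsT, hsb⟩).trans_lt h1)
    obtain ⟨c, hc1, hc2, hc3⟩ : ∃ c, t.2 < c ∧ c ≤ b ∧ (p.map ψ).eval c = 0 := by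
      rcases (hcon b hs).eq_or_lt with h0 | h0
      · exact ⟨b, htb, le_rfl, h0.symm⟩
      · obtain ⟨c, h1, h2, h3⟩ := h.ivM _ _ _ htb e2 h0
        exact ⟨c, h1, h2.le, h3⟩
    obtain ⟨v, hv1, hv2⟩ := exists_between hc1
    have e3 : (p.map ψ).eval v < (p.map ψ).eval c := by
      apply h.ivM.incr _ hv2
      intro x hx1 hx2
      exact hdM x (hcell x (hv1.trans hx1) (hx2.le.trans hc2))
    exact absurd (hcon v (hcell v hv1 (hv2.le.trans hc2))) (not_le.2 (by rw [← hc3]; exact e3))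
  · push Not at hleft
    have hcell : ∀ v, v ≤ b → Sim T y v := fun v h2 =>
      hs.left_ext hy h2 (fun s hsT hsb => absurd hsb (not_lt.2 (hleft s hsT)))
    rcases poly_atBot (p.map ψ) (by rw [natDegree_map]; exact h.deg) with hN | hN
    · obtain ⟨N, hN⟩ := hN ((p.map ψ).eval b)
      have h1 : min N (b - 1) < b := (min_le_right _ _).trans_lt (by linarith)
      have h2 := hN (min N (b - 1)) (min_le_left _ _)
      have h3 := h.ivM.incr (p.map ψ) h1 (fun c _ hc => hdM c (hcell c hc.le))
      exact absurd h2 h3.asymm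
    · obtain ⟨N, hN⟩ := hN 0
      exact absurd (hN (min N b) (min_le_left _ _)) (not_lt.2 (hcon _ (hcell _ (min_le_right _ _))))

theorem StepHyp.neg_dec (h : StepHyp φ ψ T S p) {y : L} {b : M} (hs : Sim T y b)
    (hy : ∀ t ∈ T, t.1 ≠ y) (hd : (derivative (p.map φ)).eval y < 0)
    {u : L} (hu : Sim T u b) (hu0 : (p.map φ).eval u < 0) : ∃ v, Sim T y v ∧ (p.map ψ).eval v < 0 := by
  by_contra hcon
  push Not at hcon
  have hdM : ∀ v, Sim T y v → (derivative (p.map ψ)).eval v < 0 := by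
    intro v hv
    have := h.good.sgn _ _ hv _ h.der
    rw [derivative_map] at hd ⊢
    exact sign_eq_neg this.symm hd
  have hdL : ∀ v, Sim T v b → (derivative (p.map φ)).eval v < 0 := by
    intro v hv
    have := h.good.sgn _ _ hv _ h.der
    have h2 := hdM b hs
    rw [derivative_map] at h2 ⊢
    exact sign_eq_neg this h2
  have hb : ∀ t ∈ T, t.2 ≠ b := fun t ht e => hy t ht (hs.swap.eq_of_mem (t := (t.2, t.1)) ht e)
  have huT : ∀ t ∈ T, t.1 ≠ u := fun t ht e => hb t ht (hu.eq_of_mem ht e)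
  by_cases hright : ∃ t ∈ T, b < t.2
  · obtain ⟨t, ⟨ht, htb⟩, hmin⟩ := Set.exists_min_image {t ∈ T | b < t.2} Prod.snd
      (h.good.fin.subset (fun t ht => ht.1)) (by obtain ⟨t, h1, h2⟩ := hright; exact ⟨t, h1, h2⟩)
    have hmin' : ∀ s ∈ T, u < s.1 → t.1 ≤ s.1 := by
      intro s hsT hsu
      have := hmin s ⟨hsT, (hu s hsT).1.1 hsu⟩
      have a := h.good.pi s hsT t ht
      by_contra h2
      exact absurd (a.1.1 (not_le.1 h2)) (not_lt.2 this)
    have htu : u < t.1 := (hu t ht).1.2 htb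
    have e1 : (p.map φ).eval t.1 < (p.map φ).eval u := by
      apply h.ivL.decr _ htu
      intro c hc1 hc2
      apply hdL
      apply Sim.unswap
      exact hu.swap.right_ext (fun s hs => hb (s.2, s.1) hs) hc1.le
        (fun s hsT hsc => hc2.trans_le (hmin' (s.2, s.1) hsT hsc))
    have e2 : (p.map ψ).eval t.2 < 0 := sign_eq_neg (h.pts t ht).symm (e1.trans hu0)
    have hcell : ∀ v, v < t.2 → b ≤ v → Sim T y v := fun v h1 h2 =>
      hs.right_ext hy h2 (fun s hsT hsb => h1.trans_le (hmin s ⟨hsT, hsb⟩))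
    obtain ⟨c, hc1, hc2, hc3⟩ : ∃ c, c < t.2 ∧ b ≤ c ∧ (p.map ψ).eval c = 0 := by
      rcases (hcon b hs).eq_or_lt with h0 | h0
      · exact ⟨b, htb, le_rfl, h0.symm⟩
      · obtain ⟨c, h1, h2, h3⟩ := h.ivM.mul_neg _ htb (mul_neg_of_pos_of_neg h0 e2)
        exact ⟨c, h2, h1.le, h3⟩
    obtain ⟨v, hv1, hv2⟩ := exists_between hc1
    have e3 : (p.map ψ).eval v < (p.map ψ).eval c := by
      apply h.ivM.decr _ hv1
      intro x hx1 hx2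
      exact hdM x (hcell x (hx2.trans hv2) (hc2.trans hx1.le))
    exact absurd (hcon v (hcell v hv2 (hc2.trans hv1.le))) (not_le.2 (by rw [← hc3]; exact e3))
  · push Not at hright
    have hcell : ∀ v, b ≤ v → Sim T y v := fun v h2 =>
      hs.right_ext hy h2 (fun s hsT hsb => absurd hsb (not_lt.2 (hright s hsT)))
    obtain ⟨n, hn⟩ := Nat.exists_eq_succ_of_ne_zero h.deg.ne'
    rcases poly_atTop n (p.map ψ) (by rw [natDegree_map]; exact hn) with hN | hN
    · obtain ⟨N, hN⟩ := hN ((p.map ψ).eval b)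
      have h1 : b < max N (b + 1) := lt_of_lt_of_le (by linarith) (le_max_right _ _)
      have h2 := hN (max N (b + 1)) (le_max_left _ _)
      have h3 := h.ivM.decr (p.map ψ) h1 (fun c hc _ => hdM c (hcell c hc.le))
      exact absurd h2 h3.asymm
    · obtain ⟨N, hN⟩ := hN 0
      exact absurd (hN (max N b) (le_max_left _ _)) (not_lt.2 (hcon _ (hcell _ (le_max_right _ _))))

theorem StepHyp.der_sgn (h : StepHyp φ ψ T S p) {y : L} (hy : ∀ t ∈ T, t.1 ≠ y) :
    (derivative (p.map φ)).eval y ≠ 0 := by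
  intro h0
  rw [derivative_map] at h0
  obtain ⟨t, ht, e⟩ := h.good.roots_mem h.der h.der_ne h0
  exact hy t ht e

theorem StepHyp.neg (h : StepHyp φ ψ T S p) {y : L} {b : M} (hs : Sim T y b)
    (hy : ∀ t ∈ T, t.1 ≠ y) 
    {u : L} (hu : Sim T u b) (hu0 : (p.map φ).eval u < 0) : ∃ v, Sim T y v ∧ (p.map ψ).eval v < 0 := by
  rcases lt_or_gt_of_ne (h.der_sgn hy) with h1 | h1
  · exact h.neg_dec hs hy h1 hu hu0
  · exact h.neg_inc hs hy h1 hu hu0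

theorem StepHyp.negp (h : StepHyp φ ψ T S p) : StepHyp φ ψ T (S ∪ {derivative (-p)}) (-p) := by
  refine ⟨⟨h.good.pi, h.good.fin, ?_⟩, h.ivL, h.ivM, by rw [natDegree_neg]; exact h.deg, by simp, ?_⟩
  · rintro y b hs q (hq | hq)
    · exact h.good.sgn y b hs q hq
    · rw [Set.mem_singleton_iff] at hq
      subst hq
      simp only [derivative_neg, Polynomial.map_neg, eval_neg, Left.sign_neg]
      rw [h.good.sgn y b hs _ h.der]
  · intro t ht
    simp only [Polynomial.map_neg, eval_neg, Left.sign_neg]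
    rw [h.pts t ht]

theorem StepHyp.pos (h : StepHyp φ ψ T S p) {y : L} {b : M} (hs : Sim T y b)
    (hy : ∀ t ∈ T, t.1 ≠ y) 
    {u : L} (hu : Sim T u b) (hu0 : 0 < (p.map φ).eval u) : ∃ v, Sim T y v ∧ 0 < (p.map ψ).eval v := by
  obtain ⟨v, h1, h2⟩ := h.negp.neg hs hy hu (by simpa using hu0)
  exact ⟨v, h1, by simpa using h2⟩

/-- find a root in the cell -/
theorem PolyIVT.cell_root (hM : PolyIVT M) (P : M[X]) {y : L} {v v' : M} (h : Sim T y v) (h' : Sim T y v')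
    (hv : P.eval v < 0) (hv' : 0 < P.eval v') : ∃ c, Sim T y c ∧ P.eval c = 0 := by
  rcases lt_trichotomy v v' with h1 | h1 | h1
  · obtain ⟨c, h2, h3, h4⟩ := hM P v v' h1 hv hv'
    exact ⟨c, h.convex h' h2.le h3.le, h4⟩
  · subst h1; exact absurd hv hv'.asymm
  · obtain ⟨c, h2, h3, h4⟩ := hM.mul_neg P h1 (mul_neg_of_pos_of_neg hv' hv)
    exact ⟨c, h'.convex h h2.le h3.le, h4⟩

/-- compatibility with new roots -/
def NewOK (φ : F →+* L) (ψ : F →+* M) (T : Set (L × M)) (p : F[X]) (y : L) (b : M) : Prop :=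
  ∀ y0 b0, Sim T y0 b0 → (p.map φ).eval y0 = 0 → (p.map ψ).eval b0 = 0 →
    (y < y0 ↔ b < b0) ∧ (y0 < y ↔ b0 < b)

theorem StepHyp.zero (h : StepHyp φ ψ T S p) {y : L} {b : M} (hs : Sim T y b)
    (hy : ∀ t ∈ T, t.1 ≠ y) (hn : NewOK φ ψ T p y b) (h0 : (p.map φ).eval y = 0) :
    (p.map ψ).eval b = 0 := by
  obtain ⟨a, c, hay, hyc, ha, hc⟩ := hs.nbhd h.good.fin hy
  have hcell : ∀ x, a ≤ x → x ≤ c → Sim T x b := fun x h1 h2 => (ha.swap.convex hc.swap h1 h2).unswap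
  have hsg : ∀ x, a ≤ x → x ≤ c → SignType.sign ((derivative (p.map φ)).eval x)
      = SignType.sign ((derivative (p.map φ)).eval y) := by
    intro x h1 h2
    rw [derivative_map, h.good.sgn x b (hcell x h1 h2) _ h.der, h.good.sgn y b hs _ h.der]
  obtain ⟨u, u', hu, hu', h1, h2⟩ : ∃ u u', Sim T u b ∧ Sim T u' b ∧ (p.map φ).eval u < 0 ∧
      0 < (p.map φ).eval u' := by
    rcases lt_or_gt_of_ne (h.der_sgn hy) with hd | hd
    · refine ⟨c, a, hc, ha, ?_, ?_⟩
      · rw [← h0]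
        exact h.ivL.decr _ hyc (fun x hx1 hx2 => sign_eq_neg (hsg x (hay.trans hx1).le hx2.le) hd)
      · rw [← h0]
        exact h.ivL.decr _ hay (fun x hx1 hx2 => sign_eq_neg (hsg x hx1.le (hx2.trans hyc).le) hd)
    · refine ⟨a, c, ha, hc, ?_, ?_⟩
      · rw [← h0]
        exact h.ivL.incr _ hay (fun x hx1 hx2 => sign_eq_pos (hsg x hx1.le (hx2.trans hyc).le) hd)
      · rw [← h0]
        exact h.ivL.incr _ hyc (fun x hx1 hx2 => sign_eq_pos (hsg x (hay.trans hx1).le hx2.le) hd)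
  obtain ⟨v, hv, hv0⟩ := h.neg hs hy hu h1
  obtain ⟨v', hv', hv0'⟩ := h.pos hs hy hu' h2
  obtain ⟨b0, hb0, hb00⟩ := h.ivM.cell_root _ hv hv' hv0 hv0'
  have := hn y b0 hb0 h0 hb00
  simp only [lt_irrefl, false_iff, not_lt] at this
  rw [le_antisymm this.2 this.1]; exact hb00

theorem NewOK.swap {y : L} {b : M} (hn : NewOK φ ψ T p y b) : NewOK ψ φ (swapT T) p b y := by
  intro y0 b0 h1 h2 h3
  have := hn b0 y0 h1.unswap h3 h2
  exact ⟨this.1.symm, this.2.symm⟩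

theorem StepHyp.positive (h : StepHyp φ ψ T S p) {y : L} {b : M} (hs : Sim T y b)
    (hy : ∀ t ∈ T, t.1 ≠ y) (hn : NewOK φ ψ T p y b) (h0 : 0 < (p.map φ).eval y) :
    0 < (p.map ψ).eval b := by
  have hb : ∀ t ∈ swapT T, t.1 ≠ b := fun t ht e => hy (t.2, t.1) ht (hs.swap.eq_of_mem (t := t) ht e)
  by_contra hcon
  have hb0 : (p.map ψ).eval b < 0 := by
    refine lt_of_le_of_ne (not_lt.1 hcon) (fun e => ?_)
    exact h0.ne' (h.swap.zero hs.swap hb hn.swap e)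
  obtain ⟨u, hu, hu0⟩ := h.swap.neg hs.swap hb (u := b) hs.swap hb0
  obtain ⟨v, hv, hv0⟩ := h.pos hs hy hs h0
  obtain ⟨y0, hy0, hy00⟩ := h.ivL.cell_root _ hu hs.swap hu0 h0
  obtain ⟨b0, hb0', hb00⟩ := h.ivM.cell_root _ hs hv hb0 hv0
  have hy0 := hy0.unswap
  have hN := hn y0 b0 (hb0'.comp hy0 hs) hy00 hb00
  have hsL : ∀ x, Sim T x b → SignType.sign ((derivative (p.map φ)).eval x)
      = SignType.sign ((derivative (p.map φ)).eval y) := by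
    intro x hx
    rw [derivative_map, h.good.sgn x b hx _ h.der, h.good.sgn y b hs _ h.der]
  have hsM : ∀ x, Sim T y x → SignType.sign ((derivative (p.map ψ)).eval x)
      = SignType.sign ((derivative (p.map φ)).eval y) := by
    intro x hx
    rw [derivative_map, derivative_map, ← h.good.sgn y x hx _ h.der]
  have cL : ∀ x x', Sim T x b → Sim T x' b → ∀ c, x < c → c < x' → Sim T c b := fun x x' h1 h2 c h3 h4 =>
    (h1.swap.convex h2.swap h3.le h4.le).unswap
  have cM : ∀ x x', Sim T y x → Sim T y x' → ∀ c, x < c → c < x' → Sim T y c := fun x x' h1 h2 c h3 h4 =>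
    (h1.convex h2 h3.le h4.le)
  have hne : y0 ≠ y := by rintro rfl; exact h0.ne' hy00
  rcases lt_or_gt_of_ne (h.der_sgn hy) with hd | hd
  · rcases lt_or_gt_of_ne hne with h1 | h1
    · have := h.ivL.decr (p.map φ) h1 (fun c hc1 hc2 => sign_eq_neg (hsL c (cL _ _ hy0 hs c hc1 hc2)) hd)
      rw [hy00] at this
      exact this.asymm h0
    · have h2 := hN.1.1 h1
      have := h.ivM.decr (p.map ψ) h2 (fun c hc1 hc2 => sign_eq_neg (hsM c (cM _ _ hs hb0' c hc1 hc2)) hd)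
      rw [hb00] at this
      exact this.asymm hb0
  · rcases lt_or_gt_of_ne hne with h1 | h1
    · have h2 := hN.2.1 h1
      have := h.ivM.incr (p.map ψ) h2 (fun c hc1 hc2 => sign_eq_pos (hsM c (cM _ _ hb0' hs c hc1 hc2)) hd)
      rw [hb00] at this
      exact this.asymm hb0
    · have := h.ivL.incr (p.map φ) h1 (fun c hc1 hc2 => sign_eq_pos (hsL c (cL _ _ hs hy0 c hc1 hc2)) hd)
      rw [hy00] at this
      exact this.asymm h0

theorem StepHyp.sgn (h : StepHyp φ ψ T S p) {y : L} {b : M} (hs : Sim T y b)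
    (hn : NewOK φ ψ T p y b) :
    SignType.sign ((p.map φ).eval y) = SignType.sign ((p.map ψ).eval b) := by
  by_cases hy : ∀ t ∈ T, t.1 ≠ y
  · rcases lt_trichotomy ((p.map φ).eval y) 0 with h0 | h0 | h0
    · have hn' : NewOK φ ψ T (-p) y b := fun y0 b0 h1 h2 h3 =>
        hn y0 b0 h1 (by simpa using h2) (by simpa using h3)
      have := h.negp.positive hs hy hn' (by simpa using h0)
      rw [sign_neg h0, sign_neg (by simpa using this)]
    · rw [h0, h.zero hs hy hn h0, sign_zero, sign_zero]
    · rw [sign_pos h0, sign_pos (h.positive hs hy hn h0)]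
  · push Not at hy
    obtain ⟨t, ht, rfl⟩ := hy
    rw [← hs.eq_of_mem ht rfl]
    exact h.pts t ht

theorem StepHyp.order (h : StepHyp φ ψ T S p) {y y' : L} {b b' : M} (hs : Sim T y b) (hs' : Sim T y' b')
    (h0 : (p.map φ).eval y = 0) (h0' : (p.map φ).eval y' = 0) (hlt : y < y') : b < b' := by
  obtain ⟨c, h1, h2, h3⟩ := h.ivL.rolle _ hlt h0 h0'
  rw [derivative_map] at h3
  obtain ⟨t, ht, rfl⟩ := h.good.roots_mem h.der h.der_ne h3
  exact ((hs t ht).1.1 h1).trans ((hs' t ht).2.1 h2)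

theorem StepHyp.step (h : StepHyp φ ψ T S p) : ∃ T', Good φ ψ T' (insert p S) := by
  have hp0 : p ≠ 0 := by rintro rfl; exact absurd h.deg (by simp)
  let N : Set (L × M) := {t | Sim T t.1 t.2 ∧ (p.map φ).eval t.1 = 0 ∧ (p.map ψ).eval t.2 = 0}
  have hNf : N.Finite := by
    have h1 : (p.map φ) ≠ 0 := (Polynomial.map_ne_zero_iff φ.injective).2 hp0
    have h2 : (p.map ψ) ≠ 0 := (Polynomial.map_ne_zero_iff ψ.injective).2 hp0
    refine ((finite_setOfPred_isRoot h1).prod (finite_setOfPred_isRoot h2)).subset ?_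
    rintro ⟨a, b⟩ ⟨_, h3, h4⟩
    exact ⟨h3, h4⟩
  refine ⟨T ∪ N, ⟨?_, h.good.fin.union hNf, ?_⟩⟩
  · rintro s (hsT | hsN) t (htT | htN)
    · exact h.good.pi s hsT t htT
    · have := htN.1 s hsT
      exact ⟨this.2, this.1⟩
    · exact hsN.1 t htT
    · exact ⟨⟨h.order hsN.1 htN.1 hsN.2.1 htN.2.1,
        h.swap.order hsN.1.swap htN.1.swap hsN.2.2 htN.2.2⟩,
        ⟨h.order htN.1 hsN.1 htN.2.1 hsN.2.1,
        h.swap.order htN.1.swap hsN.1.swap htN.2.2 hsN.2.2⟩⟩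
  · intro y b hs q hq
    have hsT : Sim T y b := fun t ht => hs t (Or.inl ht)
    rcases hq with rfl | hq
    · exact h.sgn hsT (fun y0 b0 h1 h2 h3 => hs (y0, b0) (Or.inr ⟨h1, h2, h3⟩))
    · exact h.good.sgn _ _ hsT q hq

theorem good_aux (hL : PolyIVT L) (hM : PolyIVT M)
    (hc : ∀ c, SignType.sign (φ c) = SignType.sign (ψ c)) (n : ℕ)
    (ih : ∀ S : Finset F[X], (∀ q ∈ S, q.natDegree < n) → ∃ T, Good φ ψ T (S : Set F[X])) 
    (B : Finset F[X]) : (∀ q ∈ B, q.natDegree = n) → ∀ A : Finset F[X], (∀ q ∈ A, q.natDegree < n) →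
      ∃ T, Good φ ψ T ((A : Set F[X]) ∪ B) := by
  classical
  induction B using Finset.induction_on with
  | empty =>
    intro _ A hA
    simpa using ih A hA
  | insert p B hpB ihB =>
    intro hB A hA
    have hBB : ∀ q ∈ B, q.natDegree = n := fun q hq => hB q (Finset.mem_insert_of_mem hq)
    have hpn : p.natDegree = n := hB p (Finset.mem_insert_self _ _)
    rcases Nat.eq_zero_or_pos n with hn | hn
    · obtain ⟨T, hT⟩ := ihB hBB A hA
      refine ⟨T, hT.pi, hT.fin, ?_⟩
      intro y b hs q hq
      by_cases hqp : q = p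
      · subst hqp
        rw [eq_C_of_natDegree_eq_zero (hpn.trans hn)]
        simpa using hc _
      · apply hT.sgn y b hs q
        simp only [Finset.coe_insert, Set.mem_union, Set.mem_insert_iff, hqp, false_or] at hq
        exact hq
    · let S2 : Finset F[X] := insert (derivative p) A ∪ B
      let A' : Finset F[X] := insert (derivative p) A ∪ (S2.filter (· ≠ 0)).image (fun q => p % q)
      have hdp : (derivative p).natDegree < n := by
        rw [← hpn]; exact natDegree_derivative_lt (by omega)
      have hS2 : ∀ q ∈ S2, q.natDegree ≤ n := by
        intro q hq
        simp only [S2, Finset.mem_union, Finset.mem_insert] at hq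
        rcases hq with (rfl | hq) | hq
        · exact hdp.le
        · exact (hA q hq).le
        · exact (hBB q hq).le
      have hA' : ∀ q ∈ A', q.natDegree < n := by
        intro q hq
        simp only [A', Finset.mem_union, Finset.mem_insert, Finset.mem_image, Finset.mem_filter] at hq
        rcases hq with (rfl | hq) | ⟨r, ⟨hr, hr0⟩, rfl⟩
        · exact hdp
        · exact hA q hq
        · by_cases hrd : r.natDegree = 0
          · have : p % r = 0 := by
              rw [EuclideanDomain.mod_eq_zero]
              exact (isUnit_iff_degree_eq_zero.2 (by rw [degree_eq_natDegree hr0, hrd]; rfl)).dvd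
            rw [this]; simpa using hn
          · exact (natDegree_mod_lt p hrd).trans_le (hS2 r hr)
      obtain ⟨T, hT⟩ := ihB hBB A' hA'
      have hsub : (S2 : Set F[X]) ⊆ (A' : Set F[X]) ∪ B := by
        intro q hq
        simp only [S2, A', Finset.coe_union, Finset.coe_insert, Set.mem_union, Set.mem_insert_iff] at hq ⊢
        tauto
      have hT2 := hT.trim hM hsub
      have hstep : StepHyp φ ψ _ (S2 : Set F[X]) p := ⟨hT2, hL, hM, by omega, by simp [S2], by
        rintro t ⟨ht, q, hq, hq0, hqt⟩
        have hqt2 : (q.map ψ).eval t.2 = 0 := by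
          have := hT.sgn _ _ (hT.pi t ht) q (hsub hq)
          rw [hqt, sign_zero] at this
          exact sign_eq_zero_iff.1 this.symm
        have hmem : p % q ∈ (A' : Set F[X]) ∪ B := by
          left
          simp only [A', Finset.coe_union, Set.mem_union, Finset.coe_image]
          right
          exact ⟨q, by simpa using ⟨hq, hq0⟩, rfl⟩
        have hs := hT.sgn _ _ (hT.pi t ht) _ hmem
        have e := EuclideanDomain.mod_add_div p q
        have e1 : (p.map φ).eval t.1 = ((p % q).map φ).eval t.1 := by
          conv_lhs => rw [← e]
          rw [Polynomial.map_add, Polynomial.map_mul, eval_add, eval_mul, hqt]; simp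
        have e2 : (p.map ψ).eval t.2 = ((p % q).map ψ).eval t.2 := by
          conv_lhs => rw [← e]
          rw [Polynomial.map_add, Polynomial.map_mul, eval_add, eval_mul, hqt2]; simp
        rw [e1, e2, hs]⟩
      obtain ⟨T', hT'⟩ := hstep.step
      refine ⟨T', hT'.mono ?_⟩
      intro q hq
      simp only [S2, Finset.coe_union, Finset.coe_insert, Set.mem_union, Set.mem_insert_iff] at hq ⊢
      tauto

theorem good_exists (hL : PolyIVT L) (hM : PolyIVT M)
    (hc : ∀ c, SignType.sign (φ c) = SignType.sign (ψ c)) (n : ℕ) :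
    ∀ S : Finset F[X], (∀ q ∈ S, q.natDegree < n) → ∃ T, Good φ ψ T (S : Set F[X]) := by
  classical
  induction n with
  | zero =>
    intro S hS
    refine ⟨∅, fun s hs => absurd hs (by simp), Set.finite_empty, ?_⟩
    intro y b _ q hq
    exact absurd (hS q hq) (by simp)
  | succ n ih =>
    intro S hS
    obtain ⟨T, hT⟩ := good_aux hL hM hc n ih (S.filter (fun q => q.natDegree = n)) (by simp)
      (S.filter (fun q => q.natDegree < n)) (by simp)
    refine ⟨T, hT.mono ?_⟩
    intro q hq
    have := hS q hq
    rcases Nat.lt_succ_iff_lt_or_eq.1 this with h | h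
    · left; simpa using ⟨hq, h⟩
    · right; simpa using ⟨hq, h⟩

theorem transfer_one (hL : PolyIVT L) (hM : PolyIVT M)
    (hc : ∀ c, SignType.sign (φ c) = SignType.sign (ψ c)) (S : Finset F[X]) (y : L) :
    ∃ b : M, ∀ p ∈ S, SignType.sign ((p.map φ).eval y) = SignType.sign ((p.map ψ).eval b) := by
  obtain ⟨T, hT⟩ := good_exists hL hM hc (S.sup natDegree + 1) S
    (fun q hq => Nat.lt_succ_of_le (Finset.le_sup (f := natDegree) hq))
  obtain ⟨b, hb⟩ := hT.pi.exists_sim hT.fin y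
  exact ⟨b, fun p hp => hT.sgn y b hb p hp⟩
end
end

section
open Polynomial

section
variable {I : Type} {U : Ultrafilter I}

theorem germ_sign {u : I → ℝ} {s : SignType} (h : ∀ᶠ i in (U : Filter I), SignType.sign (u i) = s) :
    SignType.sign (Filter.Germ.ofFun u : Filter.Germ (U : Filter I) ℝ) = s := by
  rcases s.trichotomy with rfl | rfl | rfl
  · rw [sign_eq_neg_one_iff]
    refine Filter.Germ.coe_lt.2 ?_
    filter_upwards [h] with i hi using sign_eq_neg_one_iff.1 hi
  · rw [sign_eq_zero_iff]
    refine Filter.Germ.coe_eq.2 ?_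
    filter_upwards [h] with i hi using sign_eq_zero_iff.1 hi
  · rw [sign_eq_one_iff]
    refine Filter.Germ.coe_lt.2 ?_
    filter_upwards [h] with i hi using sign_eq_one_iff.1 hi

theorem germ_sign' (u : I → ℝ) :
    ∀ᶠ i in (U : Filter I), SignType.sign (u i) =
      SignType.sign (Filter.Germ.ofFun u : Filter.Germ (U : Filter I) ℝ) := by
  rcases lt_trichotomy (Filter.Germ.ofFun u : Filter.Germ (U : Filter I) ℝ) 0 with h | h | h
  · have h' := Filter.Germ.coe_lt.1 h
    rw [sign_neg h]
    filter_upwards [h'] with i hi using sign_neg hi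
  · have h' := Filter.Germ.coe_eq.1 h
    rw [h, sign_zero]
    filter_upwards [h'] with i hi 
    rw [hi]; simp
  · have h' := Filter.Germ.coe_lt.1 h
    rw [sign_pos h]
    filter_upwards [h'] with i hi using sign_pos hi

theorem germ_eval (P : (I → ℝ)[X]) (c : I → ℝ) :
    (P.map (Filter.Germ.coeRingHom (U : Filter I))).eval (Filter.Germ.ofFun c) =
      Filter.Germ.ofFun (fun i => (P.map (Pi.evalRingHom _ i)).eval (c i)) := by
  have h1 : (P.map (Filter.Germ.coeRingHom (U : Filter I))).eval
      (Filter.Germ.coeRingHom (U : Filter I) c) = Filter.Germ.coeRingHom (U : Filter I) (P.eval c) := by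
    rw [eval_map, eval₂_at_apply]
  refine h1.trans ?_
  refine congrArg (Filter.Germ.ofFun) ?_
  funext i
  have : Pi.evalRingHom (fun _ : I => ℝ) i (P.eval c) = (P.map (Pi.evalRingHom _ i)).eval (Pi.evalRingHom (fun _ : I => ℝ) i c) := by
    rw [eval_map, eval₂_at_apply]
  exact this

theorem polyIVT_germ : PolyIVT (Filter.Germ (U : Filter I) ℝ) := by
  intro p a b hab ha hb
  have hsur : Function.Surjective (Filter.Germ.coeRingHom (R := ℝ) (U : Filter I)) :=
    fun x => Quotient.exists_rep x
  obtain ⟨P, rfl⟩ := Polynomial.map_surjective _ hsur p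
  obtain ⟨a, rfl⟩ : ∃ a' : I → ℝ, a = Filter.Germ.ofFun a' := by
    obtain ⟨a', h⟩ := Quotient.exists_rep a; exact ⟨a', h.symm⟩
  obtain ⟨b, rfl⟩ : ∃ a' : I → ℝ, b = Filter.Germ.ofFun a' := by
    obtain ⟨a', h⟩ := Quotient.exists_rep b; exact ⟨a', h.symm⟩
  rw [germ_eval] at ha hb
  have h1 := Filter.Germ.coe_lt.1 hab
  have h2 := Filter.Germ.coe_lt.1 ha
  have h3 := Filter.Germ.coe_lt.1 hb
  have key : ∀ i, ∃ c, (a i < b i → (P.map (Pi.evalRingHom _ i)).eval (a i) < 0 →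
      0 < (P.map (Pi.evalRingHom _ i)).eval (b i) → a i < c ∧ c < b i ∧
      (P.map (Pi.evalRingHom _ i)).eval c = 0) := by
    intro i
    by_cases h : a i < b i ∧ (P.map (Pi.evalRingHom _ i)).eval (a i) < 0 ∧
      0 < (P.map (Pi.evalRingHom _ i)).eval (b i)
    · obtain ⟨u1, u2, u3⟩ := h
      obtain ⟨c, hc, hc0⟩ := intermediate_value_Ioo u1.le
        (f := fun x => (P.map (Pi.evalRingHom (fun _ : I => ℝ) i)).eval x)
        (Polynomial.continuous _).continuousOn (show (0:ℝ) ∈ _ from ⟨u2, u3⟩)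
      exact ⟨c, fun _ _ _ => ⟨hc.1, hc.2, hc0⟩⟩
    · exact ⟨0, fun x y z => absurd ⟨x, y, z⟩ h⟩
  choose c hc using key
  refine ⟨Filter.Germ.ofFun c, Filter.Germ.coe_lt.2 ?_, Filter.Germ.coe_lt.2 ?_, ?_⟩
  · filter_upwards [h1, h2, h3] with i x y z using (hc i x y z).1
  · filter_upwards [h1, h2, h3] with i x y z using (hc i x y z).2.1
  · rw [germ_eval]
    refine Filter.Germ.coe_eq.2 ?_
    filter_upwards [h1, h2, h3] with i x y z using (hc i x y z).2.2

/-- constants -/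
noncomputable def germConst (U : Ultrafilter I) : ℝ →+* Filter.Germ (U : Filter I) ℝ :=
  (Filter.Germ.coeRingHom (U : Filter I)).comp (Pi.constRingHom I ℝ)

theorem germ_mv {n : ℕ} (f : MvPolynomial (Fin n) ℝ) (c : I → Fin n → ℝ) :
    MvPolynomial.eval₂ (germConst U) (fun k => Filter.Germ.ofFun (fun i => c i k)) f =
      Filter.Germ.ofFun (fun i => MvPolynomial.eval (c i) f) := by
  let H : MvPolynomial (Fin n) ℝ →+* Filter.Germ (U : Filter I) ℝ :=
    (Filter.Germ.coeRingHom (U : Filter I)).comp (RingHom.pi (fun i => MvPolynomial.eval (c i)))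
  have : MvPolynomial.eval₂Hom (germConst U) (fun k => Filter.Germ.ofFun (fun i => c i k)) = H := by
    refine MvPolynomial.ringHom_ext ?_ ?_
    · intro r
      rw [MvPolynomial.eval₂Hom_C]
      refine congrArg (Filter.Germ.ofFun) ?_
      funext i
      exact (MvPolynomial.eval_C (f := c i) r).symm
    · intro k
      rw [MvPolynomial.eval₂Hom_X']
      refine congrArg (Filter.Germ.ofFun) ?_
      funext i
      exact (MvPolynomial.eval_X (f := c i) k).symm
  exact congrArg (fun h : MvPolynomial (Fin n) ℝ →+* Filter.Germ (U : Filter I) ℝ => h f) this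
end
end

section
section
variable {L M : Type} [Field L] [LinearOrder L] [IsStrictOrderedRing L]
  [Field M] [LinearOrder M] [IsStrictOrderedRing M]

theorem sign_real_hom (ι : ℝ →+* L) (r : ℝ) : SignType.sign (ι r) = SignType.sign r := by
  have key : ∀ s : ℝ, 0 < s → 0 < ι s := by
    intro s hs
    have h : ι s = ι (Real.sqrt s) * ι (Real.sqrt s) := by
      rw [← map_mul, Real.mul_self_sqrt hs.le]
    have h0 : ι s ≠ 0 := by simpa using hs.ne'
    exact lt_of_le_of_ne (by rw [h]; exact mul_self_nonneg _) h0.symm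
  rcases lt_trichotomy r 0 with h | h | h
  · have := key (-r) (by linarith)
    rw [map_neg] at this
    rw [sign_neg h, sign_neg (by linarith)]
  · simp [h]
  · rw [sign_pos h, sign_pos (key r h)]

theorem eval2_finSucc {n : ℕ} (ι : ℝ →+* L) (y : L) (x : Fin n → L) (f : MvPolynomial (Fin (n+1)) ℝ) :
    MvPolynomial.eval₂ ι (Fin.cons y x : Fin (n+1) → L) f =
      ((MvPolynomial.finSuccEquiv ℝ n f).map (MvPolynomial.eval₂Hom ι x)).eval y := by
  let H : MvPolynomial (Fin (n+1)) ℝ →+* L :=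
    ((Polynomial.evalRingHom y).comp (Polynomial.mapRingHom (MvPolynomial.eval₂Hom ι x))).comp
      (MvPolynomial.finSuccEquiv ℝ n : MvPolynomial (Fin (n+1)) ℝ →+* _)
  have : MvPolynomial.eval₂Hom ι (Fin.cons y x : Fin (n+1) → L) = H := by
    refine MvPolynomial.ringHom_ext ?_ ?_
    · intro r
      simp [H, MvPolynomial.finSuccEquiv_apply]
    · intro k
      refine Fin.cases ?_ (fun k => ?_) k
      · simp [H, MvPolynomial.finSuccEquiv_apply]
      · simp [H, MvPolynomial.finSuccEquiv_apply]
  exact congrArg (fun h : MvPolynomial (Fin (n+1)) ℝ →+* L => h f) this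

theorem transfer_ring {R : Type} [CommRing R] (hL : PolyIVT L) (hM : PolyIVT M)
    (φ : R →+* L) (ψ : R →+* M)
    (hc : ∀ c, SignType.sign (φ c) = SignType.sign (ψ c)) (S : Finset (Polynomial R)) (y : L) :
    ∃ b : M, ∀ p ∈ S, SignType.sign ((p.map φ).eval y) = SignType.sign ((p.map ψ).eval b) := by
  classical
  have hk : ∀ c, φ c = 0 ↔ ψ c = 0 := fun c => by rw [← sign_eq_zero_iff, hc, sign_eq_zero_iff]
  let P := RingHom.ker φ
  have hP : P.IsPrime := RingHom.ker_isPrime φ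
  let φ1 : R ⧸ P →+* L := Ideal.Quotient.lift P φ (fun c h => h)
  let ψ1 : R ⧸ P →+* M := Ideal.Quotient.lift P ψ (fun c h => (hk c).1 h)
  have i1 : Function.Injective φ1 := by
    rw [injective_iff_map_eq_zero]
    intro a
    obtain ⟨a, rfl⟩ := Ideal.Quotient.mk_surjective a
    intro h
    exact Ideal.Quotient.eq_zero_iff_mem.2 h
  have i2 : Function.Injective ψ1 := by
    rw [injective_iff_map_eq_zero]
    intro a
    obtain ⟨a, rfl⟩ := Ideal.Quotient.mk_surjective a
    intro h
    exact Ideal.Quotient.eq_zero_iff_mem.2 ((hk a).2 h)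
  have hc1 : ∀ c, SignType.sign (φ1 c) = SignType.sign (ψ1 c) := by
    intro c
    obtain ⟨a, rfl⟩ := Ideal.Quotient.mk_surjective c
    exact hc a
  let F := FractionRing (R ⧸ P)
  let φ2 : F →+* L := IsFractionRing.lift i1
  let ψ2 : F →+* M := IsFractionRing.lift i2
  have e1 : ∀ a, φ2 (algebraMap _ F a) = φ1 a := fun a => IsFractionRing.lift_algebraMap i1 a
  have e2 : ∀ a, ψ2 (algebraMap _ F a) = ψ1 a := fun a => IsFractionRing.lift_algebraMap i2 a
  have hc2 : ∀ c, SignType.sign (φ2 c) = SignType.sign (ψ2 c) := by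
    intro c
    obtain ⟨a, b, hb, rfl⟩ := IsFractionRing.div_surjective (A := R ⧸ P) c
    have hb0 : b ≠ 0 := nonZeroDivisors.ne_zero hb
    have n1 : φ1 b ≠ 0 := fun h => hb0 (i1 (by simpa using h))
    have n2 : ψ1 b ≠ 0 := fun h => hb0 (i2 (by simpa using h))
    rw [map_div₀ φ2, map_div₀ ψ2, e1, e1, e2, e2]
    have t1 : φ1 a / φ1 b = φ1 (a * b) * (φ1 b)⁻¹ ^ 2 := by rw [map_mul]; field_simp
    have t2 : ψ1 a / ψ1 b = ψ1 (a * b) * (ψ1 b)⁻¹ ^ 2 := by rw [map_mul]; field_simp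
    rw [t1, t2, sign_mul, sign_mul, hc1, sign_pos (by positivity : 0 < (φ1 b)⁻¹ ^ 2),
      sign_pos (by positivity : 0 < (ψ1 b)⁻¹ ^ 2)]
  let j : R →+* F := (algebraMap (R ⧸ P) F).comp (Ideal.Quotient.mk P)
  have j1 : φ2.comp j = φ := by ext a; exact e1 _
  have j2 : ψ2.comp j = ψ := by ext a; exact e2 _
  obtain ⟨b, hb⟩ := transfer_one hL hM hc2 (S.image (Polynomial.map j)) y
  refine ⟨b, fun p hp => ?_⟩
  have := hb _ (Finset.mem_image_of_mem _ hp)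
  rwa [Polynomial.map_map, Polynomial.map_map, j1, j2] at this

theorem transfer_real (n : ℕ) : ∀ (L : Type) [Field L] [LinearOrder L] [IsStrictOrderedRing L]
    (_ : PolyIVT L) (ι : ℝ →+* L) (x : Fin n → L) (S : Finset (MvPolynomial (Fin n) ℝ)),
    ∃ a : Fin n → ℝ, ∀ f ∈ S, SignType.sign (MvPolynomial.eval₂ ι x f) =
      SignType.sign (MvPolynomial.eval a f) := by
  classical
  induction n with
  | zero =>
    intro L _ _ _ hL ι x S
    refine ⟨fun i => i.elim0, fun f _ => ?_⟩
    obtain ⟨r, rfl⟩ := MvPolynomial.C_surjective (Fin 0) f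
    simp [sign_real_hom]
  | succ n ih =>
    intro L _ _ _ hL ι x S
    choose c hc using fun S => ih L hL ι (Fin.tail x) S
    let U : Ultrafilter (Finset (MvPolynomial (Fin n) ℝ)) := Ultrafilter.of Filter.atTop
    have hU : (U : Filter (Finset (MvPolynomial (Fin n) ℝ))) ≤ Filter.atTop := Ultrafilter.of_le Filter.atTop
    let a : Fin n → Filter.Germ (U : Filter _) ℝ := fun k => Filter.Germ.ofFun (fun i => c i k)
    have hs : ∀ f, SignType.sign (MvPolynomial.eval₂Hom ι (Fin.tail x) f) =
        SignType.sign (MvPolynomial.eval₂Hom (germConst U) a f) := by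
      intro f
      have h1 := germ_mv (U := U) f c
      rw [MvPolynomial.coe_eval₂Hom, MvPolynomial.coe_eval₂Hom, h1]
      refine (germ_sign ?_).symm
      filter_upwards [hU (Filter.mem_atTop {f})] with i hi
      exact (hc i f (Finset.singleton_subset_iff.1 hi)).symm
    obtain ⟨b, hb⟩ := transfer_ring hL (polyIVT_germ (U := U)) _ _ hs
      (S.image (MvPolynomial.finSuccEquiv ℝ n)) (x 0)
    obtain ⟨b, rfl⟩ : ∃ b' : _ → ℝ, b = Filter.Germ.ofFun b' := by
      obtain ⟨a', h⟩ := Quotient.exists_rep b; exact ⟨a', h.symm⟩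
    have key : ∀ f ∈ S, ∀ᶠ i in (U : Filter _), SignType.sign (MvPolynomial.eval₂ ι x f) =
        SignType.sign (MvPolynomial.eval (Fin.cons (b i) (c i) : Fin (n+1) → ℝ) f) := by
      intro f hf
      have h1 := hb _ (Finset.mem_image_of_mem _ hf)
      rw [← eval2_finSucc, ← eval2_finSucc, Fin.cons_self_tail] at h1
      have h2 : (Fin.cons (Filter.Germ.ofFun b) a : Fin (n+1) → Filter.Germ (U : Filter _) ℝ) =
          fun k => Filter.Germ.ofFun (fun i => (Fin.cons (b i) (c i) : Fin (n+1) → ℝ) k) := by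
        funext k
        refine Fin.cases ?_ (fun k => ?_) k
        · simp
        · simp [a]
      rw [h2, germ_mv f (fun i => (Fin.cons (b i) (c i) : Fin (n+1) → ℝ))] at h1
      rw [h1]
      filter_upwards [germ_sign' (U := U) (fun i => MvPolynomial.eval
        (Fin.cons (b i) (c i) : Fin (n+1) → ℝ) f)] with i hi using hi.symm
    obtain ⟨i, hi⟩ := ((Filter.eventually_all_finset S).2 key).exists
    exact ⟨_, hi⟩
end
end

section
variable {R : Type} [CommRing R]

/-- real ideals in a commutative ring -/
def RealI (J : Ideal R) : Prop := ∀ a s : R, IsSumSq s → a * a + s ∈ J → a ∈ J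

theorem RealI.colon {P : Ideal R} (hP : RealI P) (a : R) :
    RealI (Submodule.comap (LinearMap.mulLeft R a) P : Ideal R) := by
  intro x s hs h
  simp only [Submodule.mem_comap, LinearMap.mulLeft_apply] at h ⊢
  refine hP (a * x) (a * a * s) ((IsSumSq.mul_self a).mul hs) ?_
  have := P.mul_mem_left a h
  convert this using 1
  ring

theorem exists_max_real [IsNoetherianRing R] (J : Ideal R) (hJ : RealI J) (f : R) (hf : f ∉ J) :
    ∃ P : Ideal R, J ≤ P ∧ RealI P ∧ f ∉ P ∧ P.IsPrime := by
  obtain ⟨P, ⟨hJP, hP, hfP⟩, hmax⟩ := WellFounded.has_min (wellFounded_gt (α := Ideal R))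
    {P : Ideal R | J ≤ P ∧ RealI P ∧ f ∉ P} ⟨J, le_rfl, hJ, hf⟩
  have key : ∀ a b, a * b ∈ P → b ∉ P → a * f ∈ P := by
    intro a b hab hb
    have hle : P ≤ (Submodule.comap (LinearMap.mulLeft R a) P : Ideal R) :=
      fun x hx => P.mul_mem_left a hx
    by_contra hn
    refine hmax (Submodule.comap (LinearMap.mulLeft R a) P : Ideal R)
      ⟨hJP.trans hle, hP.colon a, hn⟩ ?_
    exact lt_of_le_of_ne hle (fun e => hb (e ▸ (show b ∈ (Submodule.comap (LinearMap.mulLeft R a) P : Ideal R) from hab)))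
  refine ⟨P, hJP, hP, hfP, ⟨fun h => hfP (h ▸ Submodule.mem_top), ?_⟩⟩
  intro a b hab
  by_contra hn
  push Not at hn
  have h1 := key a b hab hn.2
  have h2 := key f a (by rwa [mul_comm]) hn.1
  exact hfP (hP f 0 IsSumSq.zero (by simpa using h2))

theorem not_sumSq_frac (P : Ideal R) [P.IsPrime] (hP : RealI P) :
    ¬ IsSumSq (-1 : FractionRing (R ⧸ P)) := by
  let j : R →+* FractionRing (R ⧸ P) :=
    (algebraMap (R ⧸ P) (FractionRing (R ⧸ P))).comp (Ideal.Quotient.mk P)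
  have j0 : ∀ a, j a = 0 ↔ a ∈ P := by
    intro a
    rw [← Ideal.Quotient.eq_zero_iff_mem]
    exact IsFractionRing.to_map_eq_zero_iff (R := R ⧸ P) (K := FractionRing (R ⧸ P))
  have jf : ∀ x, ∃ c e, e ∉ P ∧ x = j c / j e := by
    intro x
    obtain ⟨a, b, hb, rfl⟩ := IsFractionRing.div_surjective (A := R ⧸ P) x
    obtain ⟨a, rfl⟩ := Ideal.Quotient.mk_surjective a
    obtain ⟨b, rfl⟩ := Ideal.Quotient.mk_surjective b
    exact ⟨a, b, fun h => nonZeroDivisors.ne_zero hb (Ideal.Quotient.eq_zero_iff_mem.2 h), rfl⟩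
  have key : ∀ s : FractionRing (R ⧸ P), IsSumSq s → ∃ b t, b ∉ P ∧ IsSumSq t ∧ s * j (b * b) = j t := by
    intro s hs
    induction hs with
    | zero => exact ⟨1, 0, fun h => Ideal.IsPrime.ne_top ‹_› ((Ideal.eq_top_iff_one _).2 h), IsSumSq.zero, by simp⟩
    | sq_add x hs ih =>
      rename_i s
      obtain ⟨b, t, hb, ht, e1⟩ := ih
      obtain ⟨c, e, he, rfl⟩ := jf x
      have hje : j e ≠ 0 := fun h => he ((j0 e).1 h)
      refine ⟨b * e, (c * b) * (c * b) + e * e * t, fun h => ?_,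
        (IsSumSq.mul_self _).add ((IsSumSq.mul_self e).mul ht), ?_⟩
      · rcases Ideal.IsPrime.mem_or_mem ‹_› h with h | h
        · exact hb h
        · exact he h
      · simp only [map_add, map_mul, ← e1]
        field_simp
  intro h
  obtain ⟨b, t, hb, ht, e⟩ := key _ h
  refine hb (hP b t ht ((j0 _).1 ?_))
  rw [map_add, ← e]; ring

theorem real_null {d m : ℕ} (J : Ideal (MvPolynomial (Fin d) ℝ)) (hJ : RealI J)
    (g : Fin m → MvPolynomial (Fin d) ℝ) (hg : ∀ i, g i ∈ J) (f : MvPolynomial (Fin d) ℝ)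
    (hf : ∀ a, (∀ i, MvPolynomial.eval a (g i) = 0) → MvPolynomial.eval a f = 0) : f ∈ J := by
  classical
  by_contra hfJ
  obtain ⟨P, hJP, hP, hfP, hprime⟩ := exists_max_real J hJ f hfJ
  obtain ⟨L, iF, ρ, hL⟩ := exists_maxReal _ (not_sumSq_frac P hP)
  obtain ⟨o, io⟩ := hL.exists_order
  let j : MvPolynomial (Fin d) ℝ →+* FractionRing (MvPolynomial (Fin d) ℝ ⧸ P) :=
    (algebraMap _ (FractionRing (MvPolynomial (Fin d) ℝ ⧸ P))).comp (Ideal.Quotient.mk P)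
  have j0 : ∀ a, j a = 0 ↔ a ∈ P := by
    intro a
    rw [← Ideal.Quotient.eq_zero_iff_mem]
    exact IsFractionRing.to_map_eq_zero_iff (R := MvPolynomial (Fin d) ℝ ⧸ P)
      (K := FractionRing (MvPolynomial (Fin d) ℝ ⧸ P))
  let Φ : MvPolynomial (Fin d) ℝ →+* L := ρ.comp j
  have hΦ : ∀ a, Φ a = 0 ↔ a ∈ P := fun a => by
    rw [← j0]; exact map_eq_zero ρ
  have hev : MvPolynomial.eval₂Hom (Φ.comp MvPolynomial.C) (fun k => Φ (MvPolynomial.X k)) = Φ := by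
    refine MvPolynomial.ringHom_ext ?_ ?_
    · intro r; simp
    · intro k; simp
  have hev' : ∀ p, MvPolynomial.eval₂ (Φ.comp MvPolynomial.C) (fun k => Φ (MvPolynomial.X k)) p = Φ p :=
    fun p => congrArg (fun h : MvPolynomial (Fin d) ℝ →+* L => h p) hev
  obtain ⟨a, ha⟩ := transfer_real d L hL.ivt (Φ.comp MvPolynomial.C) (fun k => Φ (MvPolynomial.X k))
    (insert f (Finset.univ.image g))
  simp only [hev'] at ha
  have h1 : MvPolynomial.eval a f = 0 := by
    refine hf a (fun i => ?_)
    have := ha (g i) (by simp)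
    rwa [(hΦ _).2 (hJP (hg i)), sign_zero, eq_comm, sign_eq_zero_iff] at this
  have h2 := ha f (by simp)
  rw [h1, sign_zero, sign_eq_zero_iff, hΦ] at h2
  exact hfP h2

theorem sumSq_fin {s : R} (hs : IsSumSq s) : ∃ (k : ℕ) (u : Fin k → R), s = ∑ i, u i * u i := by
  induction hs with
  | zero => exact ⟨0, Fin.elim0, by simp⟩
  | sq_add x hs ih =>
    obtain ⟨k, u, rfl⟩ := ih
    exact ⟨k + 1, Fin.cons x u, by simp [Fin.sum_univ_succ]⟩
end

section
variable {d : ℕ}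

theorem evalQ_re (a : Fin d → ℝ) (x : Quaternion (MvPolynomial (Fin d) ℝ)) :
    (evalQ a x).re = MvPolynomial.eval a x.re := rfl

theorem evalQ_imI (a : Fin d → ℝ) (x : Quaternion (MvPolynomial (Fin d) ℝ)) :
    (evalQ a x).imI = MvPolynomial.eval a x.imI := rfl

theorem evalQ_imJ (a : Fin d → ℝ) (x : Quaternion (MvPolynomial (Fin d) ℝ)) :
    (evalQ a x).imJ = MvPolynomial.eval a x.imJ := rfl

theorem evalQ_imK (a : Fin d → ℝ) (x : Quaternion (MvPolynomial (Fin d) ℝ)) :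
    (evalQ a x).imK = MvPolynomial.eval a x.imK := rfl

/-- evaluation as a ring hom -/
noncomputable def evalQH (a : Fin d → ℝ) : Quaternion (MvPolynomial (Fin d) ℝ) →+* Quaternion ℝ where
  toFun := evalQ a
  map_zero' := by
    ext
    · exact map_zero (MvPolynomial.eval a)
    · exact map_zero (MvPolynomial.eval a)
    · exact map_zero (MvPolynomial.eval a)
    · exact map_zero (MvPolynomial.eval a)
  map_one' := by
    ext
    · exact map_one (MvPolynomial.eval a)
    · exact map_zero (MvPolynomial.eval a)
    · exact map_zero (MvPolynomial.eval a)
    · exact map_zero (MvPolynomial.eval a)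
  map_add' x y := by ext <;> simp [evalQ_re, evalQ_imI, evalQ_imJ, evalQ_imK]
  map_mul' x y := by ext <;> simp [evalQ_re, evalQ_imI, evalQ_imJ, evalQ_imK]

theorem evalQH_apply (a : Fin d → ℝ) (x : Quaternion (MvPolynomial (Fin d) ℝ)) :
    evalQH a x = evalQ a x := rfl

theorem evalQH_star (a : Fin d → ℝ) (x : Quaternion (MvPolynomial (Fin d) ℝ)) :
    evalQH a (star x) = star (evalQH a x) := by
  ext <;> simp [evalQH_apply, evalQ_re, evalQ_imI, evalQ_imJ, evalQ_imK]

theorem eval_normSq (a : Fin d → ℝ) (x : Quaternion (MvPolynomial (Fin d) ℝ)) :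
    MvPolynomial.eval a (Quaternion.normSq x) = Quaternion.normSq (evalQH a x) := by
  simp [evalQH_apply, evalQ_re, evalQ_imI, evalQ_imJ, evalQ_imK, Quaternion.normSq_def']

theorem ker_real (a : Fin d → ℝ) : (RingHom.ker (evalQH a)).IsRealLeftIdeal := by
  intro k x h i
  have h2 : ∑ i, Quaternion.normSq (evalQH a (x i)) = 0 := by
    have e : evalQH a (∑ i, star (x i) * x i) =
        ((∑ i, Quaternion.normSq (evalQH a (x i)) : ℝ) : Quaternion ℝ) := by
      rw [map_sum, ← Quaternion.algebraMap_def, map_sum]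
      refine Finset.sum_congr rfl (fun i _ => ?_)
      rw [map_mul, evalQH_star, Quaternion.star_mul_self, Quaternion.algebraMap_def]
    have h3 : evalQH a (∑ i, star (x i) * x i) = 0 := h
    rw [e] at h3
    exact Quaternion.coe_injective (h3.trans Quaternion.coe_zero.symm)
  rw [Finset.sum_eq_zero_iff_of_nonneg (fun i _ => Quaternion.normSq_nonneg)] at h2
  exact Quaternion.normSq_eq_zero.1 (h2 i (Finset.mem_univ i))

/-- contraction of a left ideal to the center -/
noncomputable def contr (I : Ideal (Quaternion (MvPolynomial (Fin d) ℝ))) :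
    Ideal (MvPolynomial (Fin d) ℝ) where
  carrier := {f | (f : Quaternion (MvPolynomial (Fin d) ℝ)) ∈ I}
  zero_mem' := by simp
  add_mem' := by
    intro x y hx hy
    simp only [Set.mem_ofPred_eq, Quaternion.coe_add] at *
    exact I.add_mem hx hy
  smul_mem' := by
    intro c x hx
    simp only [Set.mem_ofPred_eq, smul_eq_mul, Quaternion.coe_mul] at *
    exact I.mul_mem_left _ hx

theorem mem_contr (I : Ideal (Quaternion (MvPolynomial (Fin d) ℝ))) (f : MvPolynomial (Fin d) ℝ) :
    f ∈ contr I ↔ (f : Quaternion (MvPolynomial (Fin d) ℝ)) ∈ I := Iff.rfl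

theorem contr_real (I : Ideal (Quaternion (MvPolynomial (Fin d) ℝ))) (hI : I.IsRealLeftIdeal) :
    RealI (contr I) := by
  intro a s hs h
  obtain ⟨k, u, rfl⟩ := sumSq_fin hs
  have hsum : ∀ (k : ℕ) (u : Fin k → MvPolynomial (Fin d) ℝ),
      ∑ i, star (u i : Quaternion (MvPolynomial (Fin d) ℝ)) * (u i : Quaternion (MvPolynomial (Fin d) ℝ))
        = ((∑ i, u i * u i : MvPolynomial (Fin d) ℝ) : Quaternion (MvPolynomial (Fin d) ℝ)) := by
    intro k u
    induction k with
    | zero => simp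
    | succ k ih => rw [Fin.sum_univ_succ, Fin.sum_univ_succ, ih (fun i => u i.succ)]; simp
  have := hI (k + 1) (fun i => ((Fin.cons a u : Fin (k+1) → MvPolynomial (Fin d) ℝ) i :
    Quaternion (MvPolynomial (Fin d) ℝ))) (by
      rw [hsum, Fin.sum_univ_succ]
      simpa using (mem_contr _ _).1 h) 0
  exact (mem_contr _ _).2 (by simpa using this)
end

/-- **First Quaternionic Nullstellensatz (Theorem B).** -/
theorem quaternionic_nullstellensatz_central (d m : ℕ)
    (p : Fin m → Quaternion (MvPolynomial (Fin d) ℝ))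
    (q : Quaternion (MvPolynomial (Fin d) ℝ)) :
    (∀ a : Fin d → ℝ, (∀ i, evalQ a (p i) = 0) → evalQ a q = 0) ↔
      (∀ I : Ideal (Quaternion (MvPolynomial (Fin d) ℝ)),
        I.IsRealLeftIdeal → (∀ i, p i ∈ I) → q ∈ I) := by
  constructor
  · intro h I hI hp
    have h1 : Quaternion.normSq q ∈ contr I := by
      refine real_null (contr I) (contr_real I hI) (fun i => Quaternion.normSq (p i)) ?_ _ ?_
      · intro i
        rw [mem_contr, ← Quaternion.star_mul_self]
        exact I.mul_mem_left _ (hp i)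
      · intro a ha
        rw [eval_normSq, Quaternion.normSq_eq_zero]
        refine h a (fun i => ?_)
        have := ha i
        rwa [eval_normSq, Quaternion.normSq_eq_zero] at this
    rw [mem_contr, ← Quaternion.star_mul_self] at h1
    exact hI 1 (fun _ => q) (by simpa using h1) 0
  · intro h a ha
    exact h (RingHom.ker (evalQH a)) (ker_real a) (fun i => ha i)
end
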